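/- arXiv:1708.04122 — 3 statements merged into one kernel-verified Lean document; each statement's English description precedes it below -/
import Mathlib

section
/- There exists an even, real-valued, continuous function G ∈ L¹(ℝ) with supp(Ĝ) ⊆ [−1,1] and G(0) = 1 that extremizes the problem defining 𝒞(∞), i.e., |G(0)|/‖G‖₁ = 𝒞(∞). -/
open MeasureTheory Filter
open scoped FourierTransform Real

/-- The class 𝒜 sharp constant 𝒞(A). -/
noncomputable def Ccal (A : ℝ) : ℝ :=
  sSup { r : ℝ | ∃ F : ℝ → ℂ, Continuous F ∧ Integrable F ∧ F ≠ 0 ∧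
    r = (‖F 0‖ - A * ∫ t in {t : ℝ | 1 ≤ |t|}, ‖𝓕 F t‖) / ∫ x : ℝ, ‖F x‖ }

/-- 𝒞(∞), over the bandlimited class ℰ. -/
noncomputable def CcalInf : ℝ :=
  sSup { r : ℝ | ∃ F : ℝ → ℂ, Continuous F ∧ Integrable F ∧ F ≠ 0 ∧
    Function.support (𝓕 F) ⊆ Set.Icc (-1 : ℝ) 1 ∧
    r = ‖F 0‖ / ∫ x : ℝ, ‖F x‖ }

/-- Fourier transform of a real-valued function, as a real number (its real part). -/
noncomputable def FTr (F : ℝ → ℝ) (t : ℝ) : ℝ := (𝓕 (fun x => (F x : ℂ)) t).re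

/-- The class 𝒜⁺ sharp constant 𝒞⁺(A). -/
noncomputable def CcalPlus (A : ℝ) : ℝ :=
  sSup { r : ℝ | ∃ F : ℝ → ℝ, Continuous F ∧ Integrable F ∧ F ≠ 0 ∧ (∀ x, F (-x) = F x) ∧
    r = (F 0 - A * ∫ t in {t : ℝ | 1 ≤ |t|}, max (FTr F t) 0) / ∫ x : ℝ, |F x| }

/-- 𝒞⁺(∞), over the class ℰ⁺. -/
noncomputable def CcalPlusInf : ℝ :=
  sSup { r : ℝ | ∃ F : ℝ → ℝ, Continuous F ∧ Integrable F ∧ F ≠ 0 ∧ (∀ x, F (-x) = F x) ∧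
    (∀ t : ℝ, 1 ≤ |t| → FTr F t ≤ 0) ∧
    r = F 0 / ∫ x : ℝ, |F x| }

/-- The prime counting function at a real argument. -/
noncomputable def primePi (x : ℝ) : ℕ := Nat.primeCounting ⌊x⌋₊

/-- The Brun–Titchmarsh constant 𝐁. -/
noncomputable def BrunTitchmarsh : ℝ :=
  limsup (fun x : ℝ =>
    ((primePi (x + Real.sqrt x) : ℝ) - (primePi x : ℝ)) / (Real.sqrt x / Real.log x)) atTop

open Set Topology
open scoped ComplexConjugate ContDiff

/-- Continuous integrable functions whose Fourier transform is supported in `[-1, 1]`. -/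
structure IsBandlimited (F : ℝ → ℂ) : Prop where
  continuous : Continuous F
  integrable : Integrable F
  support_fourier : Function.support (𝓕 F) ⊆ Icc (-1 : ℝ) 1

theorem fourier_continuous_of_integrable {F : ℝ → ℂ} (hF : Integrable F) : Continuous (𝓕 F) :=
  VectorFourier.fourierIntegral_continuous Real.continuous_fourierChar
    (by exact continuous_inner) hF

theorem norm_fourier_le_integral_norm (F : ℝ → ℂ) (t : ℝ) : ‖𝓕 F t‖ ≤ ∫ x, ‖F x‖ :=
  VectorFourier.norm_fourierIntegral_le_integral_norm _ _ _ _ _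

theorem integral_fourier_mul_eq {F g : ℝ → ℂ} (hF : Integrable F) (hg : Integrable g) :
    ∫ t, 𝓕 F t * g t = ∫ x, F x * 𝓕 g x := by
  simpa using! VectorFourier.integral_fourierIntegral_smul_eq_flip (L := innerₗ ℝ)
    Real.continuous_fourierChar continuous_inner hF hg

theorem fourier_conj (F : ℝ → ℂ) (t : ℝ) :
    𝓕 (fun x => conj (F x)) t = conj (𝓕 F (-t)) := by
  rw [Real.fourier_real_eq_integral_exp_smul, Real.fourier_real_eq_integral_exp_smul,
    ← integral_conj]
  congr 1 with x
  simp [← Complex.exp_conj, Complex.conj_ofNat]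

namespace IsBandlimited

variable {F G : ℝ → ℂ}

theorem hasCompactSupport_fourier (hF : IsBandlimited F) : HasCompactSupport (𝓕 F) :=
  HasCompactSupport.of_support_subset_isCompact isCompact_Icc hF.support_fourier

theorem integrable_fourier (hF : IsBandlimited F) : Integrable (𝓕 F) :=
  (fourier_continuous_of_integrable hF.integrable).integrable_of_hasCompactSupport
    hF.hasCompactSupport_fourier

theorem eq_integral_exp (hF : IsBandlimited F) (x : ℝ) :
    F x = ∫ t in Icc (-1 : ℝ) 1, Complex.exp (Complex.I * ((2 * π * (x * t) : ℝ) : ℂ)) * 𝓕 F t := by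
  have h := hF.continuous.fourierInv_fourier_eq hF.integrable hF.integrable_fourier
  rw [setIntegral_eq_integral_of_forall_compl_eq_zero]
  · conv_lhs => rw [← h, Real.fourierInv_eq']
    congr 1 with t
    simp [mul_comm]
  · intro t ht
    rw [Function.notMem_support.1 fun h' => ht (hF.support_fourier h'), mul_zero]

theorem norm_le (hF : IsBandlimited F) (x : ℝ) : ‖F x‖ ≤ 2 * ∫ y, ‖F y‖ := by
  rw [hF.eq_integral_exp x]
  refine (norm_setIntegral_le_of_norm_le_const (C := ∫ y, ‖F y‖) (by simp) fun t _ => ?_).trans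
    (le_of_eq ?_)
  · rw [norm_mul, mul_comm Complex.I, Complex.norm_exp_ofReal_mul_I, one_mul]
    exact norm_fourier_le_integral_norm F t
  · norm_num [Measure.real]; ring

theorem norm_sub_le (hF : IsBandlimited F) (x y : ℝ) :
    ‖F x - F y‖ ≤ 4 * π * (∫ z, ‖F z‖) * |x - y| := by
  have hint : ∀ x : ℝ, IntegrableOn
      (fun t : ℝ => Complex.exp (Complex.I * ((2 * π * (x * t) : ℝ) : ℂ)) * 𝓕 F t)
      (Icc (-1 : ℝ) 1) := fun x =>
    (((by fun_prop : Continuous fun t : ℝ =>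
      Complex.exp (Complex.I * ((2 * π * (x * t) : ℝ) : ℂ))).mul
      (fourier_continuous_of_integrable hF.integrable)).continuousOn).integrableOn_Icc
  rw [hF.eq_integral_exp x, hF.eq_integral_exp y, ← integral_sub (hint x) (hint y)]
  refine (norm_setIntegral_le_of_norm_le_const
    (C := 2 * π * |x - y| * ∫ y, ‖F y‖) (by simp) fun t ht => ?_).trans (le_of_eq ?_)
  · have hexp : Complex.exp (Complex.I * ((2 * π * (x * t) : ℝ) : ℂ))
        - Complex.exp (Complex.I * ((2 * π * (y * t) : ℝ) : ℂ))
        = Complex.exp (Complex.I * ((2 * π * (y * t) : ℝ) : ℂ)) *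
          (Complex.exp (Complex.I * ((2 * π * ((x - y) * t) : ℝ) : ℂ)) - 1) := by
      rw [mul_sub, ← Complex.exp_add]
      congr 2
      · push_cast; ring
      · ring
    rw [← sub_mul, hexp, norm_mul, norm_mul, mul_comm Complex.I, Complex.norm_exp_ofReal_mul_I,
      one_mul]
    refine mul_le_mul (Real.norm_exp_I_mul_ofReal_sub_one_le.trans ?_)
      (norm_fourier_le_integral_norm F t) (norm_nonneg _) (by positivity)
    rw [Real.norm_eq_abs, abs_mul (2 * π), abs_of_pos Real.two_pi_pos, abs_mul]
    have : |t| ≤ 1 := abs_le.2 ht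
    gcongr
    exact mul_le_of_le_one_right (abs_nonneg _) this
  · norm_num [Measure.real]; ring

theorem const_mul (hF : IsBandlimited F) (c : ℂ) : IsBandlimited fun x => c * F x where
  continuous := continuous_const.mul hF.continuous
  integrable := hF.integrable.const_mul c
  support_fourier := by
    have h : 𝓕 (fun x => c * F x) = fun t => c * 𝓕 F t := by
      ext t
      simp only [Real.fourier_eq', smul_eq_mul, ← integral_const_mul]
      congr 1 with x
      ring
    rw [h]
    exact (Function.support_mul_subset_right _ _).trans hF.support_fourier

theorem add (hF : IsBandlimited F) (hG : IsBandlimited G) :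
    IsBandlimited fun x => F x + G x where
  continuous := hF.continuous.add hG.continuous
  integrable := hF.integrable.add hG.integrable
  support_fourier := by
    have h : 𝓕 (fun x => F x + G x) = fun t => 𝓕 F t + 𝓕 G t := by
      ext t
      simp only [Real.fourier_eq, smul_add]
      exact integral_add ((Real.fourierIntegral_convergent_iff t).2 hF.integrable)
        ((Real.fourierIntegral_convergent_iff t).2 hG.integrable)
    rw [h]
    exact (Function.support_add _ _).trans (union_subset hF.support_fourier hG.support_fourier)

theorem comp_neg (hF : IsBandlimited F) : IsBandlimited fun x => F (-x) where
  continuous := hF.continuous.comp continuous_neg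
  integrable := hF.integrable.comp_neg
  support_fourier := by
    intro t ht
    have h := hF.support_fourier (show -t ∈ Function.support (𝓕 F) by
      rw [Function.mem_support]
      exact Real.fourier_comp_linearIsometry (LinearIsometryEquiv.neg ℝ) F t ▸ ht)
    exact ⟨by linarith [h.2], by linarith [h.1]⟩

theorem star (hF : IsBandlimited F) : IsBandlimited fun x => conj (F x) where
  continuous := Complex.continuous_conj.comp hF.continuous
  integrable := Complex.conjLIE.integrable_comp_iff.2 hF.integrable
  support_fourier := by
    intro t ht
    have h := hF.support_fourier (show -t ∈ Function.support (𝓕 F) by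
      rw [Function.mem_support, fourier_conj] at ht
      exact fun h0 => ht (by rw [h0, map_zero]))
    exact ⟨by linarith [h.2], by linarith [h.1]⟩

/-- Averaging over `x ↦ -x` and complex conjugation does not increase the `L¹` norm. -/
theorem exists_even_real (hF : IsBandlimited F) (h0 : F 0 = 1) :
    ∃ G : ℝ → ℂ, IsBandlimited G ∧ (∀ x, (G x).im = 0) ∧ (∀ x, G (-x) = G x) ∧ G 0 = 1 ∧
      ∫ x, ‖G x‖ ≤ ∫ x, ‖F x‖ := by
  have hE := (hF.add hF.comp_neg).const_mul (1 / 2)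
  set E : ℝ → ℂ := fun x => 1 / 2 * (F x + F (-x)) with hEdef
  have hG := (hE.add hE.star).const_mul (1 / 2)
  refine ⟨_, hG, fun x => ?_, fun x => ?_, ?_, ?_⟩
  · rw [Complex.add_conj, Complex.mul_im]; simp
  · simp only [hEdef, neg_neg, add_comm]
  · simp [hEdef, h0, Complex.conj_ofNat]; norm_num
  · have hneg : ∫ x, ‖F (-x)‖ = ∫ x, ‖F x‖ := integral_neg_eq_self (fun x => ‖F x‖) volume
    have hbound : ∀ x, ‖1 / 2 * (E x + (starRingEnd ℂ) (E x))‖ ≤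
        1 / 2 * (‖F x‖ + ‖F (-x)‖) := fun x => by
      have h1 : ‖E x‖ ≤ 1 / 2 * (‖F x‖ + ‖F (-x)‖) := by
        simp only [hEdef, norm_mul]
        norm_num
        exact norm_add_le _ _
      have h2 := norm_add_le (E x) ((starRingEnd ℂ) (E x))
      rw [RCLike.norm_conj] at h2
      rw [norm_mul]
      norm_num at h1 ⊢
      linarith
    calc _ ≤ ∫ x, 1 / 2 * (‖F x‖ + ‖F (-x)‖) :=
          integral_mono hG.integrable.norm
            ((hF.integrable.norm.add hF.comp_neg.integrable.norm).const_mul _) hbound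
      _ = _ := by
          rw [integral_const_mul, integral_add hF.integrable.norm hF.comp_neg.integrable.norm,
            hneg]
          ring

end IsBandlimited

/-- A uniformly bounded, uniformly Lipschitz sequence has a pointwise convergent subsequence
with continuous limit. -/
theorem exists_subseq_tendsto_of_bounded_lipschitz {f : ℕ → ℝ → ℂ} {M K : ℝ}
    (hM : ∀ n x, ‖f n x‖ ≤ M) (hK : ∀ n x y, ‖f n x - f n y‖ ≤ K * |x - y|) :
    ∃ (g : ℝ → ℂ) (φ : ℕ → ℕ), Continuous g ∧ StrictMono φ ∧
      ∀ x, Tendsto (fun n => f (φ n) x) atTop (𝓝 (g x)) := by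
  have hcont : ∀ h : ℝ → ℂ, (∀ x y, ‖h x - h y‖ ≤ K * |x - y|) → Continuous h := fun h hh =>
    (LipschitzWith.of_dist_le' (K := K) fun x y => by
      simpa [dist_eq_norm] using hh x y).continuous
  let T : Set (ℝ → ℂ) := {h | (∀ x, ‖h x‖ ≤ M) ∧ ∀ x y, ‖h x - h y‖ ≤ K * |x - y|}
  let S : Set C(ℝ, ℂ) := {h | ⇑h ∈ T}
  have himage : ContinuousMap.toFun '' S = T := by
    ext h
    exact ⟨by rintro ⟨h, hh, rfl⟩; exact hh, fun hh => ⟨⟨h, hcont h hh.2⟩, hh, rfl⟩⟩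
  have hT : IsCompact T := by
    refine (isCompact_univ_pi fun _ : ℝ => isCompact_closedBall (0 : ℂ) M).of_isClosed_subset
      ?_ fun h hh x _ => by simpa using hh.1 x
    simp only [T, ofPred_and, ofPred_forall]
    refine (isClosed_iInter fun x => ?_).inter
      (isClosed_iInter fun x => isClosed_iInter fun y => ?_)
    · exact isClosed_le (continuous_apply x).norm continuous_const
    · exact isClosed_le ((continuous_apply x).sub (continuous_apply y)).norm continuous_const
  have hS : IsCompact S := by
    refine ArzelaAscoli.isCompact_of_equicontinuous S (himage ▸ hT) ?_
    refine (LipschitzWith.uniformEquicontinuous _ (Real.toNNReal K) fun h => ?_).equicontinuous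
    exact LipschitzWith.of_dist_le' fun x y => by simpa [dist_eq_norm] using h.2.2 x y
  obtain ⟨g, -, φ, hφ, hlim⟩ := hS.tendsto_subseq
    (x := fun n => (⟨f n, hcont _ (hK n)⟩ : C(ℝ, ℂ))) fun n => ⟨hM n, hK n⟩
  exact ⟨g, φ, g.continuous, hφ, fun x =>
    ((ContinuousEvalConst.continuous_eval_const x).tendsto g).comp hlim⟩

/-- Fatou's lemma for `L¹` norms. -/
theorem integrable_and_integral_norm_le_of_tendsto {f : ℕ → ℝ → ℂ} {g : ℝ → ℂ} {C : ℝ}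
    (hf : ∀ n, Integrable (f n)) (hC : ∀ n, ∫ x, ‖f n x‖ ≤ C) (hg : Continuous g)
    (hlim : ∀ x, Tendsto (fun n => f n x) atTop (𝓝 (g x))) :
    Integrable g ∧ ∫ x, ‖g x‖ ≤ C := by
  have hC0 : 0 ≤ C := (integral_nonneg fun x => norm_nonneg (f 0 x)).trans (hC 0)
  have hle : ∫⁻ x, ‖g x‖ₑ ≤ ENNReal.ofReal C := by
    rw [lintegral_congr fun x => ((hlim x).enorm.liminf_eq).symm]
    refine (lintegral_liminf_le' fun n => (hf n).aestronglyMeasurable.enorm).trans ?_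
    refine liminf_le_of_le (by isBoundedDefault) fun b hb => ?_
    obtain ⟨n, hn⟩ := hb.exists
    refine hn.trans ?_
    rw [← ofReal_integral_norm_eq_lintegral_enorm (hf n)]
    exact ENNReal.ofReal_le_ofReal (hC n)
  have hint : Integrable g := ⟨hg.aestronglyMeasurable, hle.trans_lt ENNReal.ofReal_lt_top⟩
  refine ⟨hint, ?_⟩
  rw [← ofReal_integral_norm_eq_lintegral_enorm hint] at hle
  exact (ENNReal.ofReal_le_ofReal_iff hC0).1 hle

/-- A bounded pointwise limit of bandlimited functions is bandlimited. -/
theorem IsBandlimited.of_tendsto {f : ℕ → ℝ → ℂ} {g : ℝ → ℂ} {M : ℝ}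
    (hf : ∀ n, IsBandlimited (f n)) (hM : ∀ n x, ‖f n x‖ ≤ M) (hg : Continuous g)
    (hgi : Integrable g) (hlim : ∀ x, Tendsto (fun n => f n x) atTop (𝓝 (g x))) :
    IsBandlimited g := by
  refine ⟨hg, hgi, ?_⟩
  have hcont := fourier_continuous_of_integrable hgi
  have hU : IsOpen (Icc (-1 : ℝ) 1)ᶜ := isClosed_Icc.isOpen_compl
  have hae : ∀ᵐ t, t ∈ (Icc (-1 : ℝ) 1)ᶜ → 𝓕 g t = 0 := by
    refine hU.ae_eq_zero_of_integral_contDiff_smul_eq_zero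
      (hcont.locallyIntegrable.locallyIntegrableOn _) fun φ hφ hφc hφs => ?_
    have hψc : HasCompactSupport fun t => (φ t : ℂ) := hφc.comp_left Complex.ofReal_zero
    have hψd : ContDiff ℝ ∞ fun t => (φ t : ℂ) := Complex.ofRealCLM.contDiff.comp hφ
    let ψ := hψc.toSchwartzMap hψd
    have hzero : ∀ n, ∫ x, f n x * 𝓕 (ψ : ℝ → ℂ) x = 0 := fun n => by
      rw [← integral_fourier_mul_eq (hf n).integrable ψ.integrable]
      refine integral_eq_zero_of_ae (Eventually.of_forall fun t => ?_)
      by_cases ht : t ∈ Icc (-1 : ℝ) 1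
      · have : φ t = 0 := image_eq_zero_of_notMem_tsupport fun h => hφs h ht
        simp [ψ, this]
      · simp [Function.notMem_support.1 fun h => ht ((hf n).support_fourier h)]
    have hψint : Integrable (𝓕 (ψ : ℝ → ℂ)) := by
      rw [← SchwartzMap.fourier_coe]; exact (𝓕 ψ).integrable
    have hconv : Tendsto (fun n => ∫ x, f n x * 𝓕 (ψ : ℝ → ℂ) x) atTop
        (𝓝 (∫ x, g x * 𝓕 (ψ : ℝ → ℂ) x)) := by
      refine tendsto_integral_of_dominated_convergence (fun x => M * ‖𝓕 (ψ : ℝ → ℂ) x‖)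
        (fun n => (hf n).continuous.aestronglyMeasurable.mul hψint.aestronglyMeasurable)
        (hψint.norm.const_mul M) (fun n => Eventually.of_forall fun x => ?_)
        (Eventually.of_forall fun x => (hlim x).mul_const _)
      rw [norm_mul]
      exact mul_le_mul_of_nonneg_right (hM n x) (norm_nonneg _)
    simp only [hzero] at hconv
    have hg0 := tendsto_nhds_unique hconv tendsto_const_nhds
    rw [← integral_fourier_mul_eq hgi ψ.integrable] at hg0
    rw [← hg0]
    congr 1 with t
    simp [ψ, mul_comm]
  have heq : EqOn (𝓕 g) 0 (Icc (-1 : ℝ) 1)ᶜ :=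
    Measure.eqOn_open_of_ae_eq ((ae_restrict_iff' hU.measurableSet).2 hae) hU
      hcont.continuousOn continuousOn_const
  intro t ht
  by_contra hc
  exact ht (heq hc)

theorem exists_isBandlimited_apply_zero_ne_zero : ∃ F : ℝ → ℂ, IsBandlimited F ∧ F 0 ≠ 0 := by
  let b : ContDiffBump (0 : ℝ) := ⟨1 / 2, 1, by norm_num, by norm_num⟩
  have hψc : HasCompactSupport fun t => (b t : ℂ) :=
    b.hasCompactSupport.comp_left Complex.ofReal_zero
  have hψd : ContDiff ℝ ∞ fun t => (b t : ℂ) := Complex.ofRealCLM.contDiff.comp b.contDiff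
  let ψ := hψc.toSchwartzMap hψd
  refine ⟨(𝓕⁻ ψ : SchwartzMap ℝ ℂ), ⟨(𝓕⁻ ψ).continuous, (𝓕⁻ ψ).integrable, ?_⟩, ?_⟩
  · rw [← SchwartzMap.fourier_coe, FourierTransform.fourier_fourierInv_eq]
    intro t ht
    have : t ∈ Function.support b := fun h => ht (by simp [ψ, h])
    rw [b.support_eq, Real.ball_eq_Ioo] at this
    exact Ioo_subset_Icc_self (by simpa [b] using this)
  · rw [SchwartzMap.fourierInv_coe, Real.fourierInv_eq']
    simp only [inner_zero_right, mul_zero, Complex.ofReal_zero, zero_mul, Complex.exp_zero,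
      one_smul]
    change ∫ t, (b t : ℂ) ≠ 0
    rw [integral_complex_ofReal]
    exact Complex.ofReal_ne_zero.2 (ne_of_gt (b.integral_pos (μ := volume)))

/-- The quotients `‖F 0‖ / ‖F‖₁` over nonzero bandlimited `F`. -/
def bandlimitedQuotients : Set ℝ :=
  {r | ∃ F : ℝ → ℂ, IsBandlimited F ∧ F ≠ 0 ∧ r = ‖F 0‖ / ∫ x, ‖F x‖}

theorem CcalInf_eq_sSup_bandlimitedQuotients : CcalInf = sSup bandlimitedQuotients := by
  unfold CcalInf bandlimitedQuotients
  congr 1 with r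
  exact ⟨fun ⟨F, h1, h2, h3, h4, h5⟩ => ⟨F, ⟨h1, h2, h4⟩, h3, h5⟩,
    fun ⟨F, h, h3, h5⟩ => ⟨F, h.1, h.2, h3, h.3, h5⟩⟩

theorem bddAbove_bandlimitedQuotients : BddAbove bandlimitedQuotients := by
  refine ⟨2, ?_⟩
  rintro r ⟨F, hF, -, rfl⟩
  exact div_le_of_le_mul₀ (integral_nonneg fun _ => norm_nonneg _) (by norm_num) (hF.norm_le 0)

theorem IsBandlimited.div_le_CcalInf {F : ℝ → ℂ} (hF : IsBandlimited F) (h0 : F 0 ≠ 0) :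
    ‖F 0‖ / ∫ x, ‖F x‖ ≤ CcalInf := by
  rw [CcalInf_eq_sSup_bandlimitedQuotients]
  exact le_csSup bddAbove_bandlimitedQuotients ⟨F, hF, fun h => h0 (by simp [h]), rfl⟩

theorem IsBandlimited.integral_norm_pos {F : ℝ → ℂ} (hF : IsBandlimited F) (h0 : F 0 ≠ 0) :
    0 < ∫ x, ‖F x‖ := by
  linarith [hF.norm_le 0, norm_pos_iff.2 h0]

theorem CcalInf_pos : 0 < CcalInf := by
  obtain ⟨F, hF, h0⟩ := exists_isBandlimited_apply_zero_ne_zero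
  exact (div_pos (norm_pos_iff.2 h0) (hF.integral_norm_pos h0)).trans_le (hF.div_le_CcalInf h0)

/-- The supremum defining `CcalInf` is attained in the form `‖G 0‖ = CcalInf`, `‖G‖₁ ≤ 1`. -/
theorem exists_isBandlimited_norm_apply_zero_eq :
    ∃ G : ℝ → ℂ, IsBandlimited G ∧ ‖G 0‖ = CcalInf ∧ ∫ x, ‖G x‖ ≤ 1 := by
  have hne : bandlimitedQuotients.Nonempty := by
    obtain ⟨F, hF, h0⟩ := exists_isBandlimited_apply_zero_ne_zero
    exact ⟨_, F, hF, fun h => h0 (by simp [h]), rfl⟩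
  obtain ⟨r, -, hr, hmem⟩ := exists_seq_tendsto_sSup hne bddAbove_bandlimitedQuotients
  rw [← CcalInf_eq_sSup_bandlimitedQuotients] at hr
  choose F hF _ hrF using hmem
  let H : ℕ → ℝ → ℂ := fun n x => ((∫ y, ‖F n y‖ : ℝ) : ℂ)⁻¹ * F n x
  have hH : ∀ n, IsBandlimited (H n) := fun n => (hF n).const_mul _
  have hnorm : ∀ n x, ‖H n x‖ = (∫ y, ‖F n y‖)⁻¹ * ‖F n x‖ := fun n x => by
    rw [norm_mul, norm_inv, Complex.norm_real, Real.norm_of_nonneg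
      (integral_nonneg fun _ => norm_nonneg _)]
  have hH1 : ∀ n, ∫ x, ‖H n x‖ ≤ 1 := fun n => by
    simp only [hnorm, integral_const_mul]
    exact inv_mul_le_one
  have hH0 : ∀ n, ‖H n 0‖ = r n := fun n => by rw [hnorm, hrF, div_eq_inv_mul]
  have hM : ∀ n x, ‖H n x‖ ≤ 2 := fun n x => by linarith [(hH n).norm_le x, hH1 n]
  have hK : ∀ n x y, ‖H n x - H n y‖ ≤ 4 * π * |x - y| := fun n x y =>
    ((hH n).norm_sub_le x y).trans <| mul_le_mul_of_nonneg_right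
      (mul_le_of_le_one_right (by positivity) (hH1 n)) (abs_nonneg _)
  obtain ⟨G, φ, hGc, hφ, hlim⟩ := exists_subseq_tendsto_of_bounded_lipschitz hM hK
  obtain ⟨hGi, hG1⟩ := integrable_and_integral_norm_le_of_tendsto
    (fun n => (hH (φ n)).integrable) (fun n => hH1 (φ n)) hGc hlim
  refine ⟨G, .of_tendsto (fun n => hH (φ n)) (fun n => hM (φ n)) hGc hGi hlim, ?_, hG1⟩
  have h := (hlim 0).norm
  simp only [hH0] at h
  exact tendsto_nhds_unique h (hr.comp hφ.tendsto_atTop)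

/-- Existence of an even, real-valued extremizer G with G(0) = 1 for 𝒞(∞). -/
theorem exists_extremizer_CcalInf :
    ∃ G : ℝ → ℂ, Continuous G ∧ Integrable G ∧ (∀ x, (G x).im = 0) ∧
      (∀ x, G (-x) = G x) ∧ Function.support (𝓕 G) ⊆ Set.Icc (-1 : ℝ) 1 ∧
      G 0 = 1 ∧ ‖G 0‖ / (∫ x : ℝ, ‖G x‖) = CcalInf := by
  obtain ⟨F, hF, hF0, hF1⟩ := exists_isBandlimited_norm_apply_zero_eq
  have hne : F 0 ≠ 0 := norm_pos_iff.1 (hF0 ▸ CcalInf_pos)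
  obtain ⟨G, hG, him, heven, hG0, hGF⟩ :=
    (hF.const_mul (F 0)⁻¹).exists_even_real (inv_mul_cancel₀ hne)
  have hG0' : G 0 ≠ 0 := by simp [hG0]
  refine ⟨G, hG.1, hG.2, him, heven, hG.3, hG0, (hG.div_le_CcalInf hG0').antisymm ?_⟩
  simp only [norm_mul, norm_inv, integral_const_mul, hF0] at hGF
  rw [hG0, norm_one, le_div_iff₀ (hG.integral_norm_pos hG0')]
  calc CcalInf * ∫ x, ‖G x‖ ≤ CcalInf * (CcalInf⁻¹ * ∫ x, ‖F x‖) :=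
        mul_le_mul_of_nonneg_left hGF CcalInf_pos.le
    _ = ∫ x, ‖F x‖ := mul_inv_cancel_left₀ CcalInf_pos.ne' _
    _ ≤ 1 := hF1
end

section
/- Let H : ℝ → ℝ be the continuous function H(x) = cos(2πx)/(1 − 16x²) (extended continuously to x = ±1/4). Then H ∈ L¹(ℝ), its Fourier transform is Ĥ(t) = (π/4)·cos(πt/2) for |t| ≤ 1 and Ĥ(t) = 0 for |t| > 1, its L¹-norm equals ‖H‖₁ = (π/4)·∫_{−1}^{1} (sin(πt))/(πt) dt, and consequently 𝒞(∞) ≥ c₀ := (4/π)·(∫_{−1}^{1} (sin(πt))/(πt) dt)^{−1}. -/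
open MeasureTheory Filter
open scoped FourierTransform Real

/-- The unfolding identity: integrating against a bounded `1`-periodic function only sees the
periodization, here assumed constant. -/
lemma integral_mul_of_periodic_of_tsum_eq {f s : ℝ → ℝ} {c C : ℝ} (hf : Integrable f)
    (hsm : Measurable s) (hsb : ∀ x, |s x| ≤ C) (hsp : Function.Periodic s 1)
    (hsum : ∀ x, ∑' n : ℤ, f (x + n) = c) :
    ∫ x, f x * s x = c * ∫ x in (0 : ℝ)..1, s x := by
  have hfs : Integrable (fun x => f x * s x) :=
    hf.mul_bdd hsm.aestronglyMeasurable (Eventually.of_forall hsb)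
  have hper : ∀ (n : ℤ) (x : ℝ), s (x + n) = s x := fun n x => by
    simpa using hsp.int_mul n x
  have hunfold := hfs.hasSum_intervalIntegral_comp_add_int
  have hnorm := hfs.norm.hasSum_intervalIntegral_comp_add_int.summable
  simp only [intervalIntegral.integral_of_le zero_le_one] at hunfold hnorm ⊢
  have hswap := hasSum_integral_of_summable_integral_norm
    (μ := volume.restrict (Set.Ioc (0 : ℝ) 1))
    (F := fun (n : ℤ) (x : ℝ) => f (x + n) * s (x + n))
    (fun n => (hfs.comp_add_right (n : ℝ)).integrableOn) hnorm
  rw [hunfold.unique hswap, ← integral_const_mul]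
  simp only [hper, tsum_mul_right, hsum]

lemma abs_sign_le_one (y : ℝ) : |Real.sign y| ≤ 1 := by
  rcases Real.sign_apply_eq y with h | h | h <;> simp [h]

lemma measurable_sign_cos_two_pi : Measurable fun x : ℝ => Real.sign (Real.cos (2 * π * x)) := by
  have hsign : Measurable Real.sign := by
    unfold Real.sign
    exact Measurable.ite measurableSet_Iio measurable_const
      (Measurable.ite measurableSet_Ioi measurable_const measurable_const)
  exact hsign.comp (by fun_prop)

lemma periodic_sign_cos_two_pi :
    Function.Periodic (fun x : ℝ => Real.sign (Real.cos (2 * π * x))) 1 := fun x => by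
  simp only [mul_add, mul_one, Real.cos_add_two_pi]

lemma integral_sign_cos_two_pi : ∫ x in (0 : ℝ)..1, Real.sign (Real.cos (2 * π * x)) = 0 := by
  have hshift := periodic_sign_cos_two_pi.intervalIntegral_add_eq 0 (1 / 2)
  have hcomp := intervalIntegral.integral_comp_add_right (a := 0) (b := 1)
    (fun x : ℝ => Real.sign (Real.cos (2 * π * x))) (1 / 2)
  have hneg : ∀ x : ℝ, Real.sign (Real.cos (2 * π * (x + 1 / 2)))
      = -Real.sign (Real.cos (2 * π * x)) := fun x => by
    rw [show 2 * π * (x + 1 / 2) = 2 * π * x + π by ring, Real.cos_add_pi, Real.sign_neg]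
  simp only [hneg, intervalIntegral.integral_neg] at hcomp
  rw [zero_add, add_comm (1 / 2 : ℝ) 1] at hshift
  rw [zero_add] at hcomp
  linarith

lemma integral_cos_const_mul {c : ℝ} (hc : c ≠ 0) :
    ∫ t in (-1 : ℝ)..1, Real.cos (c * t) = 2 * Real.sin c / c := by
  rw [intervalIntegral.integral_comp_mul_left (fun t => Real.cos t) hc, integral_cos]
  simp only [mul_neg, mul_one, Real.sin_neg, smul_eq_mul]
  field_simp
  ring

lemma integral_cos_half_mul_cos {x : ℝ} (hx : 1 - 16 * x ^ 2 ≠ 0) :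
    ∫ t in (-1 : ℝ)..1, π / 4 * Real.cos (π * t / 2) * Real.cos (2 * π * x * t)
      = Real.cos (2 * π * x) / (1 - 16 * x ^ 2) := by
  have hpi := Real.pi_ne_zero
  have hx₁ : 1 + 4 * x ≠ 0 := fun h => hx (by linear_combination (1 - 4 * x) * h)
  have hx₂ : 1 - 4 * x ≠ 0 := fun h => hx (by linear_combination (1 + 4 * x) * h)
  have hc₁ : π / 2 + 2 * π * x ≠ 0 := by
    rw [show π / 2 + 2 * π * x = π / 2 * (1 + 4 * x) by ring]
    exact mul_ne_zero (by positivity) hx₁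
  have hc₂ : π / 2 - 2 * π * x ≠ 0 := by
    rw [show π / 2 - 2 * π * x = π / 2 * (1 - 4 * x) by ring]
    exact mul_ne_zero (by positivity) hx₂
  have hprod : ∀ t : ℝ, π / 4 * Real.cos (π * t / 2) * Real.cos (2 * π * x * t)
      = π / 8 * (Real.cos ((π / 2 + 2 * π * x) * t) + Real.cos ((π / 2 - 2 * π * x) * t)) := by
    intro t
    rw [show (π / 2 + 2 * π * x) * t = π * t / 2 + 2 * π * x * t by ring,
      show (π / 2 - 2 * π * x) * t = π * t / 2 - 2 * π * x * t by ring,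
      Real.cos_add, Real.cos_sub]
    ring
  simp only [hprod]
  rw [intervalIntegral.integral_const_mul, intervalIntegral.integral_add
    (Continuous.intervalIntegrable (by fun_prop) _ _)
    (Continuous.intervalIntegrable (by fun_prop) _ _),
    integral_cos_const_mul hc₁, integral_cos_const_mul hc₂, Real.sin_pi_div_two_sub,
    add_comm (π / 2), Real.sin_add_pi_div_two,
    show 2 * π * x + π / 2 = π / 2 * (1 + 4 * x) by ring,
    show π / 2 - 2 * π * x = π / 2 * (1 - 4 * x) by ring,
    show 1 - 16 * x ^ 2 = (1 + 4 * x) * (1 - 4 * x) by ring]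
  have hsum : (1 + 4 * x) + (1 - 4 * x) = 2 := by ring
  generalize 1 + 4 * x = p at *
  generalize 1 - 4 * x = q at *
  generalize Real.cos (2 * π * x) = c
  field_simp
  linear_combination 4 * c * hsum

lemma dense_setOf_one_sub_sixteen_mul_sq_ne_zero : Dense {x : ℝ | 1 - 16 * x ^ 2 ≠ 0} := by
  refine (Set.Countable.dense_compl ℝ (Set.to_countable {1 / 4, -(1 / 4 : ℝ)})).mono ?_
  intro x hx h
  refine hx ?_
  have : (x - 1 / 4) * (x - -(1 / 4)) = 0 := by linear_combination (-1 / 16) * h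
  simpa [sub_eq_zero, sub_neg_eq_add, add_eq_zero_iff_eq_neg] using this

/-- A continuous extension of `cos (2πx) / (1 - 16x²)` is a cosine transform. -/
lemma eq_integral_cos_half_mul_cos {H : ℝ → ℝ} (hHc : Continuous H)
    (hHval : ∀ x : ℝ, 1 - 16 * x ^ 2 ≠ 0 → H x = Real.cos (2 * π * x) / (1 - 16 * x ^ 2))
    (x : ℝ) :
    H x = ∫ t in (-1 : ℝ)..1, π / 4 * Real.cos (π * t / 2) * Real.cos (2 * π * x * t) := by
  refine congrFun (Continuous.ext_on dense_setOf_one_sub_sixteen_mul_sq_ne_zero hHc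
    (intervalIntegral.continuous_parametric_intervalIntegral_of_continuous'
      (f := fun y t => π / 4 * Real.cos (π * t / 2) * Real.cos (2 * π * y * t))
      (by simp only [Function.uncurry_def]; fun_prop) _ _) fun y hy => ?_) x
  exact (hHval y hy).trans (integral_cos_half_mul_cos hy).symm

/-- The truncated cosine `(π / 4) cos (πt / 2)` on `[-1, 1]`, extended by zero. -/
noncomputable def truncCos (t : ℝ) : ℝ := π / 4 * Real.cos (π * max (-1) (min t 1) / 2)

lemma continuous_truncCos : Continuous truncCos := by
  unfold truncCos; fun_prop

lemma truncCos_of_abs_le {t : ℝ} (ht : |t| ≤ 1) : truncCos t = π / 4 * Real.cos (π * t / 2) := by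
  rw [truncCos, min_eq_left (abs_le.1 ht).2, max_eq_right (abs_le.1 ht).1]

lemma truncCos_of_one_le_abs {t : ℝ} (ht : 1 ≤ |t|) : truncCos t = 0 := by
  rcases le_abs.1 ht with h | h
  · rw [truncCos, min_eq_right h, max_eq_right (by norm_num)]
    simp
  · rw [truncCos, min_eq_left (by linarith), max_eq_left (by linarith)]
    simp [neg_div]

lemma integrable_ofReal_truncCos : Integrable (fun t => (truncCos t : ℂ)) := by
  refine (Complex.continuous_ofReal.comp continuous_truncCos).integrable_of_hasCompactSupport
    (HasCompactSupport.intro (isCompact_Icc (a := (-1 : ℝ)) (b := 1)) fun t ht => ?_)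
  rw [Set.mem_Icc, ← abs_le, not_le] at ht
  simp [truncCos_of_one_le_abs ht.le]

lemma fourierInv_truncCos (x : ℝ) :
    𝓕⁻ (fun t => (truncCos t : ℂ)) x
      = ((∫ t in (-1 : ℝ)..1, π / 4 * Real.cos (π * t / 2) * Real.cos (2 * π * x * t) : ℝ) : ℂ) := by
  have hsupp : Function.support (fun t : ℝ =>
      Complex.exp (((2 * π * inner ℝ t x : ℝ) : ℂ) * Complex.I) • (truncCos t : ℂ))
      ⊆ Set.Ioc (-1) 1 := by
    intro t ht
    by_contra hmem
    refine ht ?_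
    have : 1 ≤ |t| := by
      by_contra! h
      exact hmem ⟨(abs_lt.1 h).1, (abs_lt.1 h).2.le⟩
    simp [truncCos_of_one_le_abs this]
  have hodd : ∫ t in (-1 : ℝ)..1, π / 4 * Real.cos (π * t / 2) * Real.sin (2 * π * x * t) = 0 := by
    have h := intervalIntegral.integral_comp_neg (a := (-1 : ℝ)) (b := 1)
      (fun t => π / 4 * Real.cos (π * t / 2) * Real.sin (2 * π * x * t))
    simp only [mul_neg, neg_div, Real.cos_neg, Real.sin_neg, intervalIntegral.integral_neg,
      neg_neg] at h
    linarith
  rw [Real.fourierInv_eq', ← intervalIntegral.integral_eq_integral_of_support_subset hsupp]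
  have hsplit : ∀ t ∈ Set.uIcc (-1 : ℝ) 1,
      Complex.exp (((2 * π * inner ℝ t x : ℝ) : ℂ) * Complex.I) • (truncCos t : ℂ)
      = ((π / 4 * Real.cos (π * t / 2) * Real.cos (2 * π * x * t) : ℝ) : ℂ)
        + ((π / 4 * Real.cos (π * t / 2) * Real.sin (2 * π * x * t) : ℝ) : ℂ) * Complex.I := by
    intro t ht
    rw [Set.uIcc_of_le (by norm_num)] at ht
    rw [truncCos_of_abs_le (abs_le.2 ht), Complex.exp_mul_I, ← Complex.ofReal_cos,
      ← Complex.ofReal_sin, show 2 * π * inner ℝ t x = 2 * π * x * t by simp; ring]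
    simp only [smul_eq_mul, Complex.ofReal_mul]
    ring
  rw [intervalIntegral.integral_congr hsplit, intervalIntegral.integral_add
    (Continuous.intervalIntegrable (by fun_prop) _ _)
    (Continuous.intervalIntegrable (by fun_prop) _ _), intervalIntegral.integral_mul_const,
    intervalIntegral.integral_ofReal, intervalIntegral.integral_ofReal, hodd]
  simp

/-- A continuous extension of `cos (2πx) / (1 - 16x²)` decays quadratically. -/
lemma exists_abs_le_mul_inv_one_add_sq {H : ℝ → ℝ} (hHc : Continuous H)
    (hHval : ∀ x : ℝ, 1 - 16 * x ^ 2 ≠ 0 → H x = Real.cos (2 * π * x) / (1 - 16 * x ^ 2)) :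
    ∃ M : ℝ, ∀ x, |H x| ≤ M * (1 + x ^ 2)⁻¹ := by
  obtain ⟨C, hC⟩ := (isCompact_Icc (a := (-1 : ℝ)) (b := 1)).exists_bound_of_continuousOn
    hHc.continuousOn
  have hC0 : 0 ≤ C := (norm_nonneg _).trans (hC 0 (by simp))
  refine ⟨2 * C + 1, fun x => ?_⟩
  have hx : 0 < 1 + x ^ 2 := by positivity
  rw [← div_eq_mul_inv, le_div_iff₀ hx]
  rcases le_or_gt |x| 1 with h | h
  · have h1 : |H x| ≤ C := hC x (abs_le.1 h)
    have h2 : x ^ 2 ≤ 1 := (sq_le_one_iff_abs_le_one x).2 h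
    nlinarith [abs_nonneg (H x)]
  · have h2 : 1 < x ^ 2 := (one_lt_sq_iff_one_lt_abs x).2 h
    have h3 : 0 < 16 * x ^ 2 - 1 := by linarith
    rw [hHval x (by linarith), abs_div, abs_sub_comm, abs_of_pos h3, div_mul_eq_mul_div,
      div_le_iff₀ h3]
    nlinarith [Real.abs_cos_le_one (2 * π * x), abs_nonneg (Real.cos (2 * π * x))]

/-- By Poisson summation, a function whose Fourier transform is `truncCos` has constant
periodization. -/
lemma tsum_int_eq_of_fourier_eq_truncCos {H : ℝ → ℝ} {M : ℝ} (hHc : Continuous H)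
    (hM : ∀ x, |H x| ≤ M * (1 + x ^ 2)⁻¹)
    (hF : 𝓕 (fun x => (H x : ℂ)) = fun t => (truncCos t : ℂ)) (x : ℝ) :
    ∑' n : ℤ, H (x + n) = π / 4 := by
  have hdecay : (fun x => (H x : ℂ)) =O[cocompact ℝ] fun x : ℝ => |x| ^ (-2 : ℝ) := by
    refine Asymptotics.IsBigO.of_bound M ?_
    filter_upwards [(isCompact_singleton (x := (0 : ℝ))).compl_mem_cocompact] with y hy
    have hy0 : 0 < |y| := abs_pos.2 hy
    have hM0 : 0 ≤ M := by simpa using (abs_nonneg _).trans (hM 0)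
    rw [Complex.norm_real, Real.norm_eq_abs, Real.norm_of_nonneg (by positivity),
      Real.rpow_neg hy0.le, Real.rpow_two, sq_abs]
    refine (hM y).trans (mul_le_mul_of_nonneg_left ?_ hM0)
    have : 0 < y ^ 2 := by rw [← sq_abs]; positivity
    gcongr
    linarith
  have hvanish : ∀ n : ℤ, n ≠ 0 → 𝓕 (fun x => (H x : ℂ)) n = 0 := fun n hn => by
    rw [hF]
    simp only [truncCos_of_one_le_abs (t := n) (by exact_mod_cast Int.one_le_abs hn),
      Complex.ofReal_zero]
  have hpoisson := Real.tsum_eq_tsum_fourier_of_rpow_decay_of_summable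
    (f := fun x => (H x : ℂ)) (by fun_prop) one_lt_two hdecay
    (hasSum_single 0 hvanish).summable x
  rw [tsum_eq_single (f := fun n : ℤ => 𝓕 (fun x => (H x : ℂ)) n * fourier n (x : UnitAddCircle))
    0 fun n hn => by rw [hvanish n hn, zero_mul], hF, ← Complex.ofReal_tsum] at hpoisson
  simp only [Int.cast_zero, truncCos_of_abs_le (t := 0) (by simp), fourier_zero, mul_one] at hpoisson
  simpa using Complex.ofReal_injective hpoisson

/-- The sign of `cos (2πx) / (1 - 16x²)` is that of `cos (2πx)` on `(-1/4, 1/4)` and the opposite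
outside. -/
lemma ae_abs_eq_indicator_sub_mul_sign {H : ℝ → ℝ}
    (hHval : ∀ x : ℝ, 1 - 16 * x ^ 2 ≠ 0 → H x = Real.cos (2 * π * x) / (1 - 16 * x ^ 2)) :
    (fun x => |H x|) =ᵐ[volume] fun x =>
      2 * (Set.Ioc (-(1 / 4) : ℝ) (1 / 4)).indicator H x
        - H x * Real.sign (Real.cos (2 * π * x)) := by
  have hne : ∀ᵐ x : ℝ, x ∉ ({1 / 4, -(1 / 4)} : Set ℝ) :=
    (Set.to_countable _).ae_notMem volume
  filter_upwards [hne] with x hx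
  simp only [Set.mem_insert_iff, Set.mem_singleton_iff, not_or] at hx
  have hpi := Real.pi_pos
  by_cases h : x ∈ Set.Ioc (-(1 / 4) : ℝ) (1 / 4)
  · have hlt : x < 1 / 4 := lt_of_le_of_ne h.2 hx.1
    have hcos : 0 < Real.cos (2 * π * x) :=
      Real.cos_pos_of_mem_Ioo ⟨by nlinarith [h.1], by nlinarith⟩
    have hden : 0 < 1 - 16 * x ^ 2 := by nlinarith [h.1]
    have hH : 0 < H x := by rw [hHval x hden.ne']; positivity
    rw [Set.indicator_of_mem h, Real.sign_of_pos hcos, abs_of_pos hH]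
    ring
  · have hden : 1 - 16 * x ^ 2 < 0 := by
      rw [Set.mem_Ioc, not_and_or, not_lt, not_le] at h
      rcases h with h | h
      · have : x < -(1 / 4) := lt_of_le_of_ne h hx.2
        nlinarith
      · nlinarith
    rw [Set.indicator_of_notMem h, hHval x hden.ne, abs_div, abs_of_neg hden]
    rcases lt_trichotomy (Real.cos (2 * π * x)) 0 with hc | hc | hc
    · rw [Real.sign_of_neg hc, abs_of_neg hc]; field
    · simp [hc]
    · rw [Real.sign_of_pos hc, abs_of_pos hc]; field

/-- Fourier inversion gives a pointwise bound on bandlimited functions. -/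
lemma norm_apply_zero_le_of_support_fourier_subset {F : ℝ → ℂ} (hFc : Continuous F)
    (hFi : Integrable F) (hsupp : Function.support (𝓕 F) ⊆ Set.Icc (-1 : ℝ) 1) :
    ‖F 0‖ ≤ 2 * ∫ x, ‖F x‖ := by
  have hcont : Continuous (𝓕 F) :=
    VectorFourier.fourierIntegral_continuous Real.continuous_fourierChar
      (by exact continuous_inner) hFi
  have hbound : ∀ t, ‖𝓕 F t‖ ≤ ∫ x, ‖F x‖ := fun t =>
    VectorFourier.norm_fourierIntegral_le_integral_norm _ _ _ _ _
  have hint : Integrable (𝓕 F) := hcont.integrable_of_hasCompactSupport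
    (HasCompactSupport.of_support_subset_isCompact isCompact_Icc hsupp)
  have hinv := congrFun (hFc.fourierInv_fourier_eq hFi hint) 0
  rw [Real.fourierInv_eq'] at hinv
  simp only [inner_zero_right, mul_zero, Complex.ofReal_zero, zero_mul, Complex.exp_zero,
    one_smul] at hinv
  rw [← hinv, ← setIntegral_eq_integral_of_forall_compl_eq_zero (s := Set.Icc (-1 : ℝ) 1)
    fun t ht => by_contra fun h => ht (hsupp h)]
  refine (norm_setIntegral_le_of_norm_le_const (by simp) fun t _ => hbound t).trans_eq ?_
  rw [Real.volume_real_Icc_of_le (by norm_num)]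
  ring

lemma div_integral_norm_le_CcalInf {F : ℝ → ℂ} (hFc : Continuous F) (hFi : Integrable F)
    (hF0 : F ≠ 0) (hsupp : Function.support (𝓕 F) ⊆ Set.Icc (-1 : ℝ) 1) :
    ‖F 0‖ / ∫ x, ‖F x‖ ≤ CcalInf := by
  refine le_csSup ⟨2, ?_⟩ ⟨F, hFc, hFi, hF0, hsupp, rfl⟩
  rintro r ⟨G, hGc, hGi, -, hGs, rfl⟩
  exact div_le_of_le_mul₀ (integral_nonneg fun x => norm_nonneg _) zero_le_two
    (norm_apply_zero_le_of_support_fourier_subset hGc hGi hGs)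

/-- Exchanging the integrals evaluates the mass of the cosine transform on `[-1/4, 1/4]`. -/
lemma integral_quarter_cos_transform :
    ∫ x in (-(1 / 4) : ℝ)..(1 / 4),
      ∫ t in (-1 : ℝ)..1, π / 4 * Real.cos (π * t / 2) * Real.cos (2 * π * x * t)
      = π / 8 * ∫ t in (-1 : ℝ)..1, Real.sin (π * t) / (π * t) := by
  rw [intervalIntegral_intervalIntegral_swap, ← intervalIntegral.integral_const_mul]
  · refine intervalIntegral.integral_congr_ae ?_
    have h0 : ∀ᵐ t : ℝ, t ≠ 0 := by simp [ae_iff]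
    filter_upwards [h0] with t ht _
    have hc : 2 * π * t ≠ 0 := by have := Real.pi_ne_zero; positivity
    rw [intervalIntegral.integral_const_mul]
    have hcomp := intervalIntegral.integral_comp_mul_left (a := -(1 / 4)) (b := 1 / 4)
      (fun u => Real.cos u) hc
    simp only [show ∀ x : ℝ, 2 * π * x * t = 2 * π * t * x from fun x => by ring]
    rw [hcomp, integral_cos, show 2 * π * t * -(1 / 4) = -(π * t / 2) by ring,
      show 2 * π * t * (1 / 4) = π * t / 2 by ring, Real.sin_neg,
      show π * t = 2 * (π * t / 2) by ring, Real.sin_two_mul, smul_eq_mul]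
    have := Real.pi_ne_zero
    field_simp
    ring
  · refine (ContinuousOn.integrableOn_compact (isCompact_uIcc.prod isCompact_uIcc) ?_).mono_set
      (Set.prod_mono Set.uIoc_subset_uIcc Set.uIoc_subset_uIcc)
    simp only [Function.uncurry_def]
    fun_prop

/-- Properties of H(x) = cos(2πx)/(1 − 16x²) and the resulting lower bound for 𝒞(∞). -/
theorem H_properties_and_lower_bound
    (H : ℝ → ℝ) (hHc : Continuous H)
    (hHval : ∀ x : ℝ, 1 - 16 * x ^ 2 ≠ 0 → H x = Real.cos (2 * π * x) / (1 - 16 * x ^ 2)) :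
    Integrable H ∧
    (∀ t : ℝ, |t| ≤ 1 →
      𝓕 (fun x => (H x : ℂ)) t = ((π / 4 * Real.cos (π * t / 2) : ℝ) : ℂ)) ∧
    (∀ t : ℝ, 1 < |t| → 𝓕 (fun x => (H x : ℂ)) t = 0) ∧
    (∫ x : ℝ, |H x|) = π / 4 * ∫ t in (-1 : ℝ)..1, Real.sin (π * t) / (π * t) ∧
    4 / π * (∫ t in (-1 : ℝ)..1, Real.sin (π * t) / (π * t))⁻¹ ≤ CcalInf := by
  obtain ⟨M, hM⟩ := exists_abs_le_mul_inv_one_add_sq hHc hHval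
  have hHi : Integrable H := (integrable_inv_one_add_sq.const_mul M).mono'
    hHc.aestronglyMeasurable (Eventually.of_forall hM)
  have hinv : 𝓕⁻ (fun t => (truncCos t : ℂ)) = fun x => (H x : ℂ) := by
    funext x
    rw [fourierInv_truncCos, ← eq_integral_cos_half_mul_cos hHc hHval]
  have hFint : Integrable (𝓕 (fun t => (truncCos t : ℂ))) := by
    have : 𝓕 (fun t => (truncCos t : ℂ)) = fun x => ((H (-x) : ℝ) : ℂ) := by
      funext x
      have h := congrFun hinv (-x)
      rwa [Real.fourierInv_eq_fourier_neg, neg_neg] at h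
    rw [this]
    exact hHi.comp_neg.ofReal
  have hF : 𝓕 (fun x => (H x : ℂ)) = fun t => (truncCos t : ℂ) := by
    rw [← hinv]
    exact (Complex.continuous_ofReal.comp continuous_truncCos).fourier_fourierInv_eq
      integrable_ofReal_truncCos hFint
  have hnorm : (∫ x : ℝ, |H x|) = π / 4 * ∫ t in (-1 : ℝ)..1, Real.sin (π * t) / (π * t) := by
    have hzero : ∫ x, H x * Real.sign (Real.cos (2 * π * x)) = 0 := by
      rw [integral_mul_of_periodic_of_tsum_eq hHi measurable_sign_cos_two_pi
        (fun x => abs_sign_le_one _) periodic_sign_cos_two_pi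
        (tsum_int_eq_of_fourier_eq_truncCos hHc hM hF), integral_sign_cos_two_pi, mul_zero]
    have hHs : Integrable fun x => H x * Real.sign (Real.cos (2 * π * x)) :=
      hHi.mul_bdd measurable_sign_cos_two_pi.aestronglyMeasurable
        (Eventually.of_forall fun x => abs_sign_le_one _)
    have hmid := integral_quarter_cos_transform
    simp only [← eq_integral_cos_half_mul_cos hHc hHval] at hmid
    rw [intervalIntegral.integral_of_le (by norm_num), ← integral_indicator measurableSet_Ioc]
      at hmid
    rw [integral_congr_ae (ae_abs_eq_indicator_sub_mul_sign hHval), integral_sub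
      ((hHi.indicator measurableSet_Ioc).const_mul 2) hHs, integral_const_mul, hmid, hzero]
    ring
  refine ⟨hHi, fun t ht => ?_, fun t ht => ?_, hnorm, ?_⟩
  · simp only [hF, truncCos_of_abs_le ht]
  · simp only [hF, truncCos_of_one_le_abs ht.le, Complex.ofReal_zero]
  · have hH0 : H 0 = 1 := by simpa using hHval 0 (by norm_num)
    have h := div_integral_norm_le_CcalInf (F := fun x => (H x : ℂ)) (by fun_prop) hHi.ofReal
      (fun h => by simpa [hH0] using congrFun h 0) (by
        intro t ht
        rw [hF] at ht
        by_contra hmem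
        rw [Set.mem_Icc, ← abs_le, not_le] at hmem
        exact ht (by simp [truncCos_of_one_le_abs hmem.le]))
    simp only [Complex.norm_real, Real.norm_eq_abs, hH0, abs_one, hnorm] at h
    refine le_of_eq_of_le ?_ h
    rw [one_div, mul_inv, inv_div]
end

section
/- There exists a nonzero function G ∈ ℰ⁺ that extremizes the problem defining 𝒞⁺(∞), i.e., G(0)/‖G‖₁ = 𝒞⁺(∞). -/
open MeasureTheory Filter
open scoped FourierTransform Real

open scoped Topology ComplexConjugate SchwartzMap ContDiff

/-- Fatou's lemma for a sequence of nonnegative real functions with convergent bounds on the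
integrals. -/
theorem integrable_and_integral_le_of_tendsto_ae {h : ℕ → ℝ → ℝ} {k : ℝ → ℝ} {B : ℕ → ℝ} {b : ℝ}
    (hi : ∀ n, Integrable (h n)) (h0 : ∀ n x, 0 ≤ h n x) (hB : ∀ n, ∫ x, h n x ≤ B n)
    (hb : Tendsto B atTop (𝓝 b))
    (hlim : ∀ᵐ x, Tendsto (fun n => h n x) atTop (𝓝 (k x))) :
    Integrable k ∧ ∫ x, k x ≤ b := by
  have hk0 : 0 ≤ᵐ[volume] k := by
    filter_upwards [hlim] with x hx
    exact ge_of_tendsto' hx fun n => h0 n x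
  have hkm : AEStronglyMeasurable k volume :=
    aestronglyMeasurable_of_tendsto_ae atTop (fun n => (hi n).1) hlim
  have key : ∫⁻ x, ENNReal.ofReal (k x) ≤ ENNReal.ofReal b := by
    calc ∫⁻ x, ENNReal.ofReal (k x)
        = ∫⁻ x, liminf (fun n => ENNReal.ofReal (h n x)) atTop := by
          apply lintegral_congr_ae
          filter_upwards [hlim] with x hx
          exact ((ENNReal.tendsto_ofReal hx).liminf_eq).symm
      _ ≤ liminf (fun n => ∫⁻ x, ENNReal.ofReal (h n x)) atTop :=
          lintegral_liminf_le' fun n => (hi n).1.aemeasurable.ennreal_ofReal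
      _ ≤ liminf (fun n => ENNReal.ofReal (B n)) atTop := by
          refine liminf_le_liminf (Eventually.of_forall fun n => ?_)
          rw [← ofReal_integral_eq_lintegral_ofReal (hi n) (Eventually.of_forall (h0 n))]
          exact ENNReal.ofReal_le_ofReal (hB n)
      _ = ENNReal.ofReal b := (ENNReal.tendsto_ofReal hb).liminf_eq
  have hki : Integrable k :=
    ⟨hkm, (hasFiniteIntegral_iff_ofReal hk0).2 (key.trans_lt ENNReal.ofReal_lt_top)⟩
  refine ⟨hki, ?_⟩
  have hb0 : 0 ≤ b := ge_of_tendsto' hb fun n => (integral_nonneg (h0 n)).trans (hB n)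
  rw [← ofReal_integral_eq_lintegral_ofReal hki hk0] at key
  exact (ENNReal.ofReal_le_ofReal_iff hb0).1 key

/-- Multiplication formula for the Fourier transform. -/
theorem integral_fourier_mul_eq_integral_mul_fourier {f g : ℝ → ℂ} (hf : Integrable f)
    (hg : Integrable g) : ∫ x, 𝓕 f x * g x = ∫ x, f x * 𝓕 g x := by
  simpa using! VectorFourier.integral_fourierIntegral_smul_eq_flip (L := innerₗ ℝ)
      Real.continuous_fourierChar continuous_inner hf hg

/-- Gaussian summability of the Fourier inversion integral at the origin. -/
theorem tendsto_integral_gaussian_mul_fourier {f : ℝ → ℂ} (hf : Integrable f)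
    (hc : ContinuousAt f 0) :
    Tendsto (fun c : ℝ => ∫ w : ℝ, Complex.exp (-c⁻¹ * ‖w‖ ^ 2) * 𝓕 f w) atTop (𝓝 (f 0)) := by
  apply (Real.tendsto_integral_gaussian_smul' hf hc).congr'
  filter_upwards [Ioi_mem_atTop 0] with c (hc : 0 < c)
  have J : Integrable (fun w : ℝ ↦ Complex.exp (- c⁻¹ * ‖w‖ ^ 2)) := by
    simpa using GaussianFourier.integrable_cexp_neg_mul_sq_norm_add (V := ℝ)
      (b := (c⁻¹ : ℂ)) (by norm_cast; simpa) 0 0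
  rw [← integral_fourier_mul_eq_integral_mul_fourier J hf]
  congr with w
  have := fourier_gaussian_innerProductSpace' (V := ℝ) (b := (c⁻¹ : ℂ)) (by norm_cast; simpa) 0 w
  simp only [inner_zero_left, Complex.ofReal_zero, mul_zero, add_zero, ← Complex.ofReal_inv] at this
  rw [this]
  simp only [smul_eq_mul]
  congr 2
  · simp
  · congr 1
    simp; ring

section FTr

variable {F G : ℝ → ℝ}

theorem fourier_ofReal_neg (hF : Function.Even F) (t : ℝ) :
    𝓕 (fun x => (F x : ℂ)) (-t) = 𝓕 (fun x => (F x : ℂ)) t := by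
  rw [← Real.fourierInv_eq_fourier_neg, Real.fourierInv_eq_fourier_comp_neg]
  simp only [hF _]

theorem ofReal_FTr (hF : Function.Even F) (t : ℝ) :
    (FTr F t : ℂ) = 𝓕 (fun x => (F x : ℂ)) t := by
  have h : conj (𝓕 (fun x => (F x : ℂ)) t) = 𝓕 (fun x => (F x : ℂ)) (-t) := by
    rw [Real.fourier_real_eq_integral_exp_smul, Real.fourier_real_eq_integral_exp_smul,
      ← integral_conj]
    congr with x
    simp [← Complex.exp_conj, Complex.conj_ofNat]
  rw [fourier_ofReal_neg hF] at h
  exact Complex.conj_eq_iff_re.1 h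

theorem FTr_even (hF : Function.Even F) : Function.Even (FTr F) := fun t => by
  simp only [FTr, fourier_ofReal_neg hF]

theorem abs_FTr_le (F : ℝ → ℝ) (t : ℝ) : |FTr F t| ≤ ∫ x, |F x| := by
  refine (Complex.abs_re_le_norm _).trans ?_
  refine (VectorFourier.norm_fourierIntegral_le_integral_norm _ _ _ _ _).trans ?_
  simp

theorem continuous_FTr (hF : Integrable F) : Continuous (FTr F) :=
  Complex.continuous_re.comp
    (VectorFourier.fourierIntegral_continuous Real.continuous_fourierChar
      (L := innerₗ ℝ) continuous_inner hF.ofReal)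

theorem FTr_zero (F : ℝ → ℝ) : FTr F 0 = ∫ x, F x := by
  simp [FTr, Real.fourier_real_eq, integral_complex_ofReal]

theorem FTr_congr_ae (h : F =ᵐ[volume] G) : FTr F = FTr G := by
  ext t
  simp only [FTr, Real.fourier_real_eq]
  congr 1
  apply integral_congr_ae
  filter_upwards [h] with x hx
  rw [hx]

theorem FTr_add (hF : Integrable F) (hG : Integrable G) (t : ℝ) :
    FTr (fun x => F x + G x) t = FTr F t + FTr G t := by
  have h := congrFun (VectorFourier.fourierIntegral_add Real.continuous_fourierChar
    (L := innerₗ ℝ) (μ := volume) continuous_inner (f := fun x => (F x : ℂ))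
    (g := fun x => (G x : ℂ)) hF.ofReal hG.ofReal) t
  have e : (fun x => ((F x + G x : ℝ) : ℂ)) = (fun x => (F x : ℂ)) + fun x => (G x : ℂ) := by
    ext x
    simp
  simp only [FTr, e, ← Complex.add_re]
  exact congrArg Complex.re h

theorem FTr_const_mul (c : ℝ) (F : ℝ → ℝ) (t : ℝ) :
    FTr (fun x => c * F x) t = c * FTr F t := by
  simp only [FTr, Real.fourier_real_eq_integral_exp_smul, smul_eq_mul, Complex.ofReal_mul]
  rw [← Complex.re_ofReal_mul, ← integral_const_mul]
  congr 2 with x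
  ring

/-- Fourier inversion for even real functions. -/
theorem FTr_FTr (hF : Function.Even F) (hc : Continuous F) (hi : Integrable F)
    (hi' : Integrable (FTr F)) : FTr (FTr F) = F := by
  have e : (fun t => (FTr F t : ℂ)) = 𝓕 (fun x => (F x : ℂ)) := funext (ofReal_FTr hF)
  have h := (Complex.continuous_ofReal.comp hc).fourierInv_fourier_eq hi.ofReal
    (e ▸ hi'.ofReal)
  ext x
  have h' := congrFun h x
  rw [Real.fourierInv_eq_fourier_neg] at h'
  rw [← FTr_even (FTr_even hF) x, FTr, e]
  simpa using! congrArg Complex.re h'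

end FTr

/-- An integrable function whose Fourier transform agrees weakly with `v` has Fourier transform
`v` almost everywhere. -/
theorem fourier_ae_eq_of_forall_schwartz {u v : ℝ → ℂ} (hu : Integrable u)
    (hv : LocallyIntegrable v)
    (h : ∀ φ : 𝓢(ℝ, ℂ), ∫ x, 𝓕 (φ : ℝ → ℂ) x * u x = ∫ x, φ x * v x) :
    𝓕 u =ᵐ[volume] v := by
  have hc : Continuous (𝓕 u) := VectorFourier.fourierIntegral_continuous
    Real.continuous_fourierChar (L := innerₗ ℝ) continuous_inner hu
  refine ae_eq_of_integral_contDiff_smul_eq hc.locallyIntegrable hv fun g hg hgs => ?_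
  have hgs' : HasCompactSupport (fun x => (g x : ℂ)) := hgs.comp_left Complex.ofReal_zero
  let φ : 𝓢(ℝ, ℂ) := hgs'.toSchwartzMap (Complex.ofRealCLM.contDiff.comp hg)
  have hφ : ∀ x, φ x = (g x : ℂ) := fun x => rfl
  have := h φ
  rw [integral_fourier_mul_eq_integral_mul_fourier φ.integrable hu] at this
  simpa only [hφ, Complex.real_smul] using this

/-- In an inner product space, a decreasing sequence of nonempty, midpoint-closed, bounded sets admits a
Cauchy sequence of representatives. -/
theorem exists_cauchySeq_mem_of_antitone {H : Type*} [NormedAddCommGroup H]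
    [InnerProductSpace ℝ H] {K : ℕ → Set H} (hanti : Antitone K) (hne : ∀ n, (K n).Nonempty)
    (hmid : ∀ n, ∀ u ∈ K n, ∀ v ∈ K n, (2⁻¹ : ℝ) • (u + v) ∈ K n) {R : ℝ}
    (hR : ∀ u ∈ K 0, ‖u‖ ≤ R) : ∃ f : ℕ → H, (∀ n, f n ∈ K n) ∧ CauchySeq f := by
  set d : ℕ → ℝ := fun n => sInf ((fun u => ‖u‖ ^ 2) '' K n) with hd
  have hbdd : ∀ n, BddBelow ((fun u => ‖u‖ ^ 2) '' K n) := fun n =>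
    ⟨0, by rintro _ ⟨u, -, rfl⟩; positivity⟩
  have hdle : ∀ n, ∀ u ∈ K n, d n ≤ ‖u‖ ^ 2 := fun n u hu =>
    csInf_le (hbdd n) ⟨u, hu, rfl⟩
  have hmono : Monotone d := fun m n hmn =>
    csInf_le_csInf (hbdd m) ((hne n).image _) (Set.image_mono (hanti hmn))
  have hub : ∀ n, d n ≤ R ^ 2 := fun n => by
    obtain ⟨u, hu⟩ := hne n
    refine (hdle n u hu).trans ?_
    have := hR u (hanti (Nat.zero_le n) hu)
    gcongr
  obtain ⟨D, hD⟩ : ∃ D, Tendsto d atTop (𝓝 D) :=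
    ⟨_, tendsto_atTop_ciSup hmono ⟨R ^ 2, by rintro _ ⟨n, rfl⟩; exact hub n⟩⟩
  have hdD : ∀ n, d n ≤ D := fun n => hmono.ge_of_tendsto hD n
  have hex : ∀ n : ℕ, ∃ u ∈ K n, ‖u‖ ^ 2 < d n + 1 / ((n : ℝ) + 1) := fun n => by
    obtain ⟨_, ⟨u, hu, rfl⟩, hlt⟩ := exists_lt_of_csInf_lt ((hne n).image (fun u => ‖u‖ ^ 2))
      (show d n < d n + 1 / ((n : ℝ) + 1) by linarith [Nat.one_div_pos_of_nat (α := ℝ) (n := n)])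
    exact ⟨u, hu, hlt⟩
  choose f hfK hf using hex
  refine ⟨f, hfK, ?_⟩
  refine cauchySeq_of_le_tendsto_0
    (fun N => √(4 * (D - d N) + 4 * (1 / ((N : ℝ) + 1)))) (fun n m N hn hm => ?_) ?_
  · rw [dist_eq_norm]
    apply Real.le_sqrt_of_sq_le
    have h1 := hdle N _ (hmid N _ (hanti hn (hfK n)) _ (hanti hm (hfK m)))
    rw [norm_smul, mul_pow] at h1
    norm_num at h1
    have h2 := parallelogram_law_with_norm ℝ (f n) (f m)
    have h3 := hf n
    have h4 := hf m
    have h5 := Nat.one_div_le_one_div (α := ℝ) hn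
    have h6 := Nat.one_div_le_one_div (α := ℝ) hm
    have h7 := hdD n
    have h8 := hdD m
    nlinarith
  · have : Tendsto (fun N : ℕ => 4 * (D - d N) + 4 * (1 / ((N : ℝ) + 1))) atTop
        (𝓝 (4 * (D - D) + 4 * 0)) :=
      ((hD.const_sub D).const_mul 4).add (tendsto_one_div_add_atTop_nhds_zero_nat.const_mul 4)
    simpa using this.sqrt

theorem integrable_indicator_Icc (N : ℝ) :
    Integrable ((Set.Icc (-1 : ℝ) 1).indicator fun _ => N) :=
  (integrable_indicator_iff measurableSet_Icc).2 (by simp)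

theorem integral_indicator_Icc (N : ℝ) :
    ∫ t, (Set.Icc (-1 : ℝ) 1).indicator (fun _ => N) t = 2 * N := by
  rw [MeasureTheory.integral_indicator measurableSet_Icc]
  simp
  norm_num

/-- The class ℰ⁺ (including the zero function). -/
structure Admissible (F : ℝ → ℝ) : Prop where
  continuous : Continuous F
  integrable : Integrable F
  even : Function.Even F
  nonpos : ∀ t : ℝ, 1 ≤ |t| → FTr F t ≤ 0

namespace Admissible

variable {F G : ℝ → ℝ}

theorem add (hF : Admissible F) (hG : Admissible G) : Admissible fun x => F x + G x where
  continuous := hF.continuous.add hG.continuous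
  integrable := hF.integrable.add hG.integrable
  even x := by simp only [hF.even x, hG.even x]
  nonpos t ht := by
    rw [FTr_add hF.integrable hG.integrable]
    exact add_nonpos (hF.nonpos t ht) (hG.nonpos t ht)

theorem const_mul (hF : Admissible F) {c : ℝ} (hc : 0 ≤ c) : Admissible fun x => c * F x where
  continuous := hF.continuous.const_mul c
  integrable := hF.integrable.const_mul c
  even x := by simp only [hF.even x]
  nonpos t ht := by
    rw [FTr_const_mul]
    exact mul_nonpos_of_nonneg_of_nonpos hc (hF.nonpos t ht)

theorem FTr_le_indicator (hF : Admissible F) {N : ℝ} (hN : ∫ x, |F x| ≤ N) (t : ℝ) :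
    FTr F t ≤ (Set.Icc (-1 : ℝ) 1).indicator (fun _ => N) t := by
  by_cases ht : t ∈ Set.Icc (-1 : ℝ) 1
  · rw [Set.indicator_of_mem ht]
    exact (le_abs_self _).trans ((abs_FTr_le F t).trans hN)
  · rw [Set.indicator_of_notMem ht]
    refine hF.nonpos t ?_
    by_contra! h
    exact ht (abs_le.1 h.le)

theorem integrable_FTr (hF : Admissible F) : Integrable (FTr F) := by
  set N := ∫ x, |F x|
  set χ := (Set.Icc (-1 : ℝ) 1).indicator fun _ => N
  have hχ : Integrable χ := integrable_indicator_Icc N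
  have hN : 0 ≤ N := integral_nonneg fun x => abs_nonneg _
  have hc := continuous_FTr hF.integrable
  let e : ℕ → ℝ → ℝ := fun n t => Real.exp (-((n : ℝ) + 1)⁻¹ * t ^ 2)
  have he : ∀ n, Integrable (e n) := fun n => integrable_exp_neg_mul_sq (by positivity)
  have hef : ∀ n, Integrable fun t => e n t * FTr F t := fun n =>
    (he n).mul_bdd (c := N) hc.aestronglyMeasurable (Eventually.of_forall fun t => abs_FTr_le F t)
  have he1 : ∀ n t, e n t ≤ 1 := fun n t => by
    rw [Real.exp_le_one_iff, neg_mul, neg_nonpos]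
    positivity
  have heχ : ∀ n, Integrable fun t => e n t * χ t := fun n =>
    hχ.bdd_mul (c := 1) (he n).1 (Eventually.of_forall fun t => by
      rw [Real.norm_of_nonneg (Real.exp_nonneg _)]
      exact he1 n t)
  have hlim : Tendsto (fun n => ∫ t, e n t * FTr F t) atTop (𝓝 (F 0)) := by
    have h := tendsto_integral_gaussian_mul_fourier (f := fun x => (F x : ℂ)) hF.integrable.ofReal
      (Complex.continuous_ofReal.comp hF.continuous).continuousAt
    have hn : Tendsto (fun n : ℕ => (n : ℝ) + 1) atTop atTop :=
      tendsto_atTop_add_const_right _ _ tendsto_natCast_atTop_atTop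
    have h' := (Complex.continuous_re.tendsto _).comp (h.comp hn)
    refine h'.congr fun n => ?_
    simp only [Function.comp_apply, ← ofReal_FTr hF.even, e]
    rw [← Complex.ofReal_re (∫ t, _), ← integral_complex_ofReal]
    congr 2 with t
    simp [← Complex.ofReal_pow]
  have key := integrable_and_integral_le_of_tendsto_ae
    (h := fun n t => e n t * χ t - e n t * FTr F t) (k := fun t => χ t - FTr F t)
    (B := fun n => 2 * N - ∫ t, e n t * FTr F t)
    (fun n => (heχ n).sub (hef n))
    (fun n t => by
      rw [← mul_sub]
      exact mul_nonneg (Real.exp_nonneg _) (sub_nonneg.2 (hF.FTr_le_indicator le_rfl t)))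
    (fun n => by
      rw [integral_sub (heχ n) (hef n), ← integral_indicator_Icc N]
      refine sub_le_sub_right (integral_mono (heχ n) hχ fun t => ?_) _
      exact mul_le_of_le_one_left (Set.indicator_nonneg (fun _ _ => hN) t) (he1 n t))
    (hlim.const_sub _)
    (Eventually.of_forall fun t => by
      have h1 : Tendsto (fun n => e n t) atTop (𝓝 1) := by
        have h2 : Tendsto (fun n : ℕ => -((n : ℝ) + 1)⁻¹ * t ^ 2) atTop (𝓝 (-0 * t ^ 2)) := by
          simpa using! (tendsto_one_div_add_atTop_nhds_zero_nat (𝕜 := ℝ)).neg.mul_const (t ^ 2)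
        simpa [e] using h2.rexp
      simpa using (h1.mul_const (χ t)).sub (h1.mul_const (FTr F t)))
  exact (hχ.sub key.1).congr (Eventually.of_forall fun t => sub_sub_cancel _ _)

theorem FTr_FTr (hF : Admissible F) : FTr (FTr F) = F :=
  _root_.FTr_FTr hF.even hF.continuous hF.integrable hF.integrable_FTr

theorem integral_FTr (hF : Admissible F) : ∫ t, FTr F t = F 0 := by
  rw [← FTr_zero, hF.FTr_FTr]

theorem apply_zero_le (hF : Admissible F) : F 0 ≤ 2 * ∫ x, |F x| := by
  rw [← hF.integral_FTr, ← integral_indicator_Icc]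
  exact integral_mono hF.integrable_FTr (integrable_indicator_Icc _) (hF.FTr_le_indicator le_rfl)

theorem integral_abs_FTr_le (hF : Admissible F) (hN : ∫ x, |F x| ≤ 1) (h0 : 0 ≤ F 0) :
    ∫ t, |FTr F t| ≤ 4 := by
  calc ∫ t, |FTr F t|
      ≤ ∫ t, ((Set.Icc (-1 : ℝ) 1).indicator (fun _ => 2) t - FTr F t) := by
        refine integral_mono hF.integrable_FTr.abs
          ((integrable_indicator_Icc 2).sub hF.integrable_FTr) fun t => ?_
        have h := hF.FTr_le_indicator hN t
        by_cases ht : t ∈ Set.Icc (-1 : ℝ) 1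
        · simp only [Set.indicator_of_mem ht] at h ⊢
          exact abs_le.2 ⟨by linarith, by linarith⟩
        · simp only [Set.indicator_of_notMem ht] at h ⊢
          rw [abs_of_nonpos h, zero_sub]
    _ ≤ 4 := by
        rw [integral_sub (integrable_indicator_Icc 2) hF.integrable_FTr, hF.integral_FTr,
          integral_indicator_Icc]
        linarith

theorem abs_apply_le (hF : Admissible F) (hN : ∫ x, |F x| ≤ 1) (h0 : 0 ≤ F 0) (x : ℝ) :
    |F x| ≤ 4 := by
  have := abs_FTr_le (FTr F) x
  rw [hF.FTr_FTr] at this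
  exact this.trans (hF.integral_abs_FTr_le hN h0)

end Admissible

/-- If a continuous Fourier transform is nonpositive almost everywhere on `1 ≤ |t|`, then it is
nonpositive everywhere there. -/
theorem FTr_nonpos_of_ae {F : ℝ → ℝ} (hc : Continuous (FTr F))
    (h : ∀ᵐ t, 1 ≤ |t| → FTr F t ≤ 0) {t : ℝ} (ht : 1 ≤ |t|) : FTr F t ≤ 0 := by
  by_contra! hpos
  set U : Set ℝ := {s | 1 < |s| ∧ 0 < FTr F s}
  have hU : IsOpen U :=
    (isOpen_lt continuous_const continuous_abs).inter (isOpen_lt continuous_const hc)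
  have hne : U.Nonempty := by
    have hlim : Tendsto (fun n : ℕ => (1 + 1 / ((n : ℝ) + 1)) * t) atTop (𝓝 t) := by
      simpa using ((tendsto_one_div_add_atTop_nhds_zero_nat (𝕜 := ℝ)).const_add 1).mul_const t
    obtain ⟨n, hn⟩ := (((hc.tendsto t).comp hlim).eventually (lt_mem_nhds hpos)).exists
    refine ⟨_, ?_, hn⟩
    have hn0 := Nat.one_div_pos_of_nat (α := ℝ) (n := n)
    rw [abs_mul, abs_of_pos (by linarith)]
    nlinarith
  refine (hU.measure_pos volume hne).ne' (measure_mono_null ?_ (ae_iff.1 h))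
  rintro s ⟨hs1, hs2⟩ hs
  exact (hs hs1.le).not_gt hs2

/-- Almost everywhere limits of normalized admissible functions, together with their Fourier
transforms, produce admissible functions, and the value at the origin does not drop. -/
theorem Admissible.exists_of_tendsto_ae {F : ℕ → ℝ → ℝ} {r : ℕ → ℝ} {c : ℝ}
    (hF : ∀ n, Admissible (F n)) (hN : ∀ n, ∫ x, |F n x| ≤ 1) (hr0 : ∀ n, 0 ≤ r n)
    (hr : ∀ n, r n ≤ F n 0) (hrc : Tendsto r atTop (𝓝 c))
    (h₁ : ∀ᵐ x, ∃ l, Tendsto (fun n => F n x) atTop (𝓝 l))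
    (h₂ : ∀ᵐ t, ∃ l, Tendsto (fun n => FTr (F n) t) atTop (𝓝 l)) :
    ∃ G, Admissible G ∧ ∫ x, |G x| ≤ 1 ∧ c ≤ G 0 := by
  have h0 : ∀ n, 0 ≤ F n 0 := fun n => (hr0 n).trans (hr n)
  set u : ℝ → ℝ := fun x => limsup (fun n => F n x) atTop with hu
  set g : ℝ → ℝ := fun t => limsup (fun n => FTr (F n) t) atTop
  have hlu : ∀ᵐ x, Tendsto (fun n => F n x) atTop (𝓝 (u x)) := by
    filter_upwards [h₁] with x ⟨l, hl⟩
    rwa [show u x = l from hl.limsup_eq]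
  have hlg : ∀ᵐ t, Tendsto (fun n => FTr (F n) t) atTop (𝓝 (g t)) := by
    filter_upwards [h₂] with x ⟨l, hl⟩
    rwa [show g x = l from hl.limsup_eq]
  have hue : Function.Even u := fun x => by simp only [hu, (hF _).even x]
  obtain ⟨hui', hu1⟩ := integrable_and_integral_le_of_tendsto_ae (h := fun n x => |F n x|)
    (k := fun x => |u x|) (fun n => (hF n).integrable.abs) (fun n x => abs_nonneg _) hN
    tendsto_const_nhds (hlu.mono fun x hx => hx.abs)
  have hui : Integrable u := (integrable_norm_iff
    (aestronglyMeasurable_of_tendsto_ae atTop (fun n => (hF n).integrable.1) hlu)).1 hui'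
  obtain ⟨hgi', hg1⟩ := integrable_and_integral_le_of_tendsto_ae
    (h := fun n t => (Set.Icc (-1 : ℝ) 1).indicator (fun _ => 1) t - FTr (F n) t)
    (k := fun t => (Set.Icc (-1 : ℝ) 1).indicator (fun _ => 1) t - g t) (B := fun n => 2 * 1 - r n)
    (fun n => (integrable_indicator_Icc 1).sub (hF n).integrable_FTr)
    (fun n t => sub_nonneg.2 ((hF n).FTr_le_indicator (hN n) t))
    (fun n => by
      rw [integral_sub (integrable_indicator_Icc 1) (hF n).integrable_FTr,
        integral_indicator_Icc, (hF n).integral_FTr]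
      exact sub_le_sub_left (hr n) _)
    (hrc.const_sub _) (hlg.mono fun t ht => ht.const_sub _)
  have hgi : Integrable g := ((integrable_indicator_Icc 1).sub hgi').congr
    (Eventually.of_forall fun t => sub_sub_cancel _ _)
  rw [integral_sub (integrable_indicator_Icc 1) hgi, integral_indicator_Icc] at hg1
  have hγg : FTr u =ᵐ[volume] g := by
    have h : 𝓕 (fun x => (u x : ℂ)) =ᵐ[volume] fun t => (g t : ℂ) := by
      refine fourier_ae_eq_of_forall_schwartz hui.ofReal hgi.ofReal.locallyIntegrable fun φ => ?_
      have hφ : Integrable (𝓕 (φ : ℝ → ℂ)) := by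
        rw [← SchwartzMap.fourier_coe]
        exact (𝓕 φ).integrable
      have t1 : Tendsto (fun n => ∫ x, 𝓕 (φ : ℝ → ℂ) x * F n x) atTop
          (𝓝 (∫ x, 𝓕 (φ : ℝ → ℂ) x * u x)) := by
        refine tendsto_integral_of_dominated_convergence (fun x => ‖𝓕 (φ : ℝ → ℂ) x‖ * 4)
          (fun n => hφ.1.mul (hF n).integrable.ofReal.1) (hφ.norm.mul_const 4) (fun n => ?_) ?_
        · refine Eventually.of_forall fun x => ?_
          rw [norm_mul, Complex.norm_real]
          gcongr
          exact (hF n).abs_apply_le (hN n) (h0 n) x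
        · filter_upwards [hlu] with x hx
          exact ((Complex.continuous_ofReal.tendsto _).comp hx).const_mul _
      have t2 : Tendsto (fun n => ∫ x, φ x * FTr (F n) x) atTop (𝓝 (∫ x, φ x * g x)) := by
        refine tendsto_integral_of_dominated_convergence (fun x => ‖φ x‖ * 1)
          (fun n => φ.integrable.1.mul (hF n).integrable_FTr.ofReal.1)
          (φ.integrable.norm.mul_const 1) (fun n => ?_) ?_
        · refine Eventually.of_forall fun x => ?_
          rw [norm_mul, Complex.norm_real]
          gcongr
          exact (abs_FTr_le _ _).trans (hN n)
        · filter_upwards [hlg] with x hx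
          exact ((Complex.continuous_ofReal.tendsto _).comp hx).const_mul _
      refine tendsto_nhds_unique t1 (t2.congr fun n => ?_)
      rw [integral_fourier_mul_eq_integral_mul_fourier (g := fun x => (F n x : ℂ)) φ.integrable
        (hF n).integrable.ofReal]
      simp only [ofReal_FTr (hF n).even]
    filter_upwards [h] with t ht
    rw [FTr, ht, Complex.ofReal_re]
  have hγi : Integrable (FTr u) := hgi.congr hγg.symm
  have hGu : FTr (FTr u) =ᵐ[volume] u := by
    have h : 𝓕 (fun x => (FTr u x : ℂ)) =ᵐ[volume] fun x => (u x : ℂ) := by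
      refine fourier_ae_eq_of_forall_schwartz hγi.ofReal hui.ofReal.locallyIntegrable fun φ => ?_
      simp only [ofReal_FTr hue]
      rw [← SchwartzMap.fourier_coe,
        ← integral_fourier_mul_eq_integral_mul_fourier (g := fun x => (u x : ℂ))
          (𝓕 φ).integrable hui.ofReal,
        ← integral_neg_eq_self]
      congr with x
      rw [hue x, ← Real.fourierInv_eq_fourier_neg, ← SchwartzMap.fourierInv_coe,
        FourierTransform.fourierInv_fourier_eq]
    filter_upwards [h] with t ht
    rw [FTr, ht, Complex.ofReal_re]
  refine ⟨FTr (FTr u), ⟨continuous_FTr hγi, hui.congr hGu.symm, FTr_even (FTr_even hue), ?_⟩,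
    ?_, ?_⟩
  · rw [FTr_congr_ae hGu]
    intro t ht
    refine FTr_nonpos_of_ae (continuous_FTr hui) ?_ ht
    filter_upwards [hlg, hγg] with s hs hs' hs1
    rw [hs']
    exact le_of_tendsto' hs fun n => (hF n).nonpos s hs1
  · refine le_of_eq_of_le (integral_congr_ae ?_) hu1
    filter_upwards [hGu] with x hx
    rw [hx]
  · rw [FTr_zero, integral_congr_ae hγg]
    linarith

/-- A function and its Fourier transform, packed as one complex-valued function. -/
noncomputable def fourierPair (F : ℝ → ℝ) (x : ℝ) : ℂ := F x + FTr F x * Complex.I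

theorem normSq_fourierPair (F : ℝ → ℝ) (x : ℝ) :
    ‖fourierPair F x‖ ^ 2 = F x ^ 2 + FTr F x ^ 2 := by
  rw [← Complex.normSq_eq_norm_sq, fourierPair, Complex.normSq_add_mul_I]

section FourierPair

variable {F : ℝ → ℝ}

theorem Admissible.normSq_fourierPair_le (hF : Admissible F) (hN : ∫ x, |F x| ≤ 1)
    (h0 : 0 ≤ F 0) (x : ℝ) : ‖fourierPair F x‖ ^ 2 ≤ 4 * |F x| + |FTr F x| := by
  rw [normSq_fourierPair, ← sq_abs (F x), ← sq_abs (FTr F x)]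
  nlinarith [hF.abs_apply_le hN h0 x, (abs_FTr_le F x).trans hN, abs_nonneg (F x),
    abs_nonneg (FTr F x)]

theorem Admissible.memLp_fourierPair (hF : Admissible F) (hN : ∫ x, |F x| ≤ 1)
    (h0 : 0 ≤ F 0) : MemLp (fourierPair F) 2 := by
  have hc : Continuous (fourierPair F) :=
    (Complex.continuous_ofReal.comp hF.continuous).add
      ((Complex.continuous_ofReal.comp (continuous_FTr hF.integrable)).mul_const _)
  rw [memLp_two_iff_integrable_sq_norm hc.aestronglyMeasurable]
  refine ((hF.integrable.abs.const_mul 4).add hF.integrable_FTr.abs).mono'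
    (hc.norm.pow 2).aestronglyMeasurable (Eventually.of_forall fun x => ?_)
  rw [Real.norm_of_nonneg (by positivity)]
  exact hF.normSq_fourierPair_le hN h0 x

theorem Admissible.norm_toLp_fourierPair_le (hF : Admissible F) (hN : ∫ x, |F x| ≤ 1)
    (h0 : 0 ≤ F 0) : ‖(hF.memLp_fourierPair hN h0).toLp‖ ≤ 3 := by
  have hm := hF.memLp_fourierPair hN h0
  have h : ‖hm.toLp‖ ^ 2 ≤ 8 := by
    have e : ‖hm.toLp‖ ^ 2 = ∫ x, ‖fourierPair F x‖ ^ 2 := by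
      rw [← real_inner_self_eq_norm_sq, L2.inner_def]
      refine integral_congr_ae ?_
      filter_upwards [hm.coeFn_toLp] with x hx
      rw [hx, real_inner_self_eq_norm_sq]
    rw [e]
    calc ∫ x, ‖fourierPair F x‖ ^ 2 ≤ ∫ x, (4 * |F x| + |FTr F x|) :=
          integral_mono ((memLp_two_iff_integrable_sq_norm hm.1).1 hm)
            ((hF.integrable.abs.const_mul 4).add hF.integrable_FTr.abs)
            (hF.normSq_fourierPair_le hN h0)
      _ ≤ 8 := by
          rw [integral_add (hF.integrable.abs.const_mul 4) hF.integrable_FTr.abs,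
            integral_const_mul]
          linarith [hF.integral_abs_FTr_le hN h0]
  nlinarith [norm_nonneg hm.toLp]

end FourierPair

/-- Existence of maximizers of `F 0` under the normalization `∫ |F| ≤ 1`. -/
theorem Admissible.exists_of_approx {r : ℕ → ℝ} {c : ℝ} (hr0 : ∀ n, 0 ≤ r n) (hr : Monotone r)
    (hrc : Tendsto r atTop (𝓝 c))
    (h : ∀ n, ∃ F, Admissible F ∧ ∫ x, |F x| ≤ 1 ∧ r n ≤ F 0) :
    ∃ G, Admissible G ∧ ∫ x, |G x| ≤ 1 ∧ c ≤ G 0 := by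
  let K : ℕ → Set (Lp ℂ 2 (volume : Measure ℝ)) := fun n =>
    {v | ∃ F, Admissible F ∧ ∫ x, |F x| ≤ 1 ∧ r n ≤ F 0 ∧ v =ᵐ[volume] fourierPair F}
  have hanti : Antitone K := fun m n hmn v ⟨F, hF, hN, h0, hv⟩ =>
    ⟨F, hF, hN, (hr hmn).trans h0, hv⟩
  have hne : ∀ n, (K n).Nonempty := fun n => by
    obtain ⟨F, hF, hN, h0⟩ := h n
    have hm := hF.memLp_fourierPair hN ((hr0 n).trans h0)
    exact ⟨hm.toLp, F, hF, hN, h0, hm.coeFn_toLp⟩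
  have hmid : ∀ n, ∀ v ∈ K n, ∀ w ∈ K n, (2⁻¹ : ℝ) • (v + w) ∈ K n := by
    rintro n v ⟨F, hF, hFN, hF0, hv⟩ w ⟨G, hG, hGN, hG0, hw⟩
    refine ⟨fun x => 2⁻¹ * (F x + G x), (hF.add hG).const_mul (by norm_num), ?_, by linarith, ?_⟩
    · calc ∫ x, |2⁻¹ * (F x + G x)| ≤ ∫ x, 2⁻¹ * (|F x| + |G x|) := by
            refine integral_mono ((hF.add hG).const_mul (c := 2⁻¹) (by norm_num)).integrable.abs
              ((hF.integrable.abs.add hG.integrable.abs).const_mul _) fun x => ?_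
            simp only [abs_mul, abs_inv, Nat.abs_ofNat]
            gcongr
            exact abs_add_le _ _
        _ ≤ 1 := by
            rw [integral_const_mul, integral_add hF.integrable.abs hG.integrable.abs]
            linarith
    · filter_upwards [Lp.coeFn_smul (2⁻¹ : ℝ) (v + w), Lp.coeFn_add v w, hv, hw]
        with x h1 h2 h3 h4
      rw [h1, Pi.smul_apply, h2, Pi.add_apply, h3, h4]
      simp only [fourierPair, FTr_const_mul, FTr_add hF.integrable hG.integrable,
        Complex.real_smul]
      push_cast
      ring
  have hR : ∀ v ∈ K 0, ‖v‖ ≤ 3 := by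
    rintro v ⟨F, hF, hN, h0, hv⟩
    have h0' := (hr0 0).trans h0
    have e : v = (hF.memLp_fourierPair hN h0').toLp :=
      Lp.ext (hv.trans (hF.memLp_fourierPair hN h0').coeFn_toLp.symm)
    rw [e]
    exact hF.norm_toLp_fourierPair_le hN h0'
  obtain ⟨f, hfK, hf⟩ := exists_cauchySeq_mem_of_antitone hanti hne hmid hR
  obtain ⟨L, hL⟩ := cauchySeq_tendsto_of_complete hf
  choose F hF hN h0 hfF using hfK
  obtain ⟨σ, hσ, hae⟩ := (tendstoInMeasure_of_tendsto_Lp hL).exists_seq_tendsto_ae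
  have hall : ∀ᵐ x, ∀ n, f n x = fourierPair (F n) x := ae_all_iff.2 hfF
  refine Admissible.exists_of_tendsto_ae (F := fun n => F (σ n)) (r := fun n => r (σ n))
    (fun n => hF _) (fun n => hN _) (fun n => hr0 _) (fun n => h0 _)
    (hrc.comp hσ.tendsto_atTop) ?_ ?_
  · filter_upwards [hae, hall] with x hx hx'
    refine ⟨_, ((Complex.continuous_re.tendsto _).comp hx).congr fun n => ?_⟩
    simp [hx', fourierPair]
  · filter_upwards [hae, hall] with x hx hx'
    refine ⟨_, ((Complex.continuous_im.tendsto _).comp hx).congr fun n => ?_⟩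
    simp [hx', fourierPair]

theorem exists_admissible_apply_zero_pos : ∃ F, Admissible F ∧ 0 < F 0 := by
  let b : ContDiffBump (0 : ℝ) := ⟨1 / 2, 1, by norm_num, by norm_num⟩
  have hbe : Function.Even (b : ℝ → ℝ) := fun x => b.neg x
  have hbs : HasCompactSupport (fun x => (b x : ℂ)) :=
    b.hasCompactSupport.comp_left Complex.ofReal_zero
  let φ : 𝓢(ℝ, ℂ) := hbs.toSchwartzMap (Complex.ofRealCLM.contDiff.comp b.contDiff)
  have hφ : (φ : ℝ → ℂ) = fun x => (b x : ℂ) := rfl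
  have hint : Integrable (b : ℝ → ℝ) := b.integrable
  have hF : Integrable (FTr b) := by
    have h := (𝓕 φ).integrable (μ := volume)
    rw [SchwartzMap.fourier_coe, hφ] at h
    exact h.re
  have hinv : FTr (FTr b) = b := FTr_FTr hbe b.continuous hint hF
  refine ⟨FTr b, ⟨continuous_FTr hint, hF, FTr_even hbe, fun t ht => ?_⟩, ?_⟩
  · rw [hinv, b.zero_of_le_dist (by simpa [b] using ht)]
  · rw [FTr_zero]
    exact b.integral_pos

/-- Existence of an extremizer in ℰ⁺ for 𝒞⁺(∞). -/
theorem exists_extremizer_CcalPlusInf :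
    ∃ G : ℝ → ℝ, Continuous G ∧ Integrable G ∧ G ≠ 0 ∧ (∀ x, G (-x) = G x) ∧
      (∀ t : ℝ, 1 ≤ |t| → FTr G t ≤ 0) ∧
      G 0 / (∫ x : ℝ, |G x|) = CcalPlusInf := by
  let S : Set ℝ := { r : ℝ | ∃ F : ℝ → ℝ, Continuous F ∧ Integrable F ∧ F ≠ 0 ∧
    (∀ x, F (-x) = F x) ∧ (∀ t : ℝ, 1 ≤ |t| → FTr F t ≤ 0) ∧ r = F 0 / ∫ x : ℝ, |F x| }
  have hmem : ∀ {F : ℝ → ℝ}, Admissible F → F ≠ 0 → F 0 / (∫ x, |F x|) ∈ S := fun {F} hF h0 =>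
    ⟨F, hF.continuous, hF.integrable, h0, hF.even, hF.nonpos, rfl⟩
  have hadm : ∀ r ∈ S, ∃ F, Admissible F ∧ r = F 0 / ∫ x, |F x| := by
    rintro r ⟨F, h1, h2, -, h3, h4, h5⟩
    exact ⟨F, ⟨h1, h2, h3, h4⟩, h5⟩
  have hbdd : BddAbove S := by
    refine ⟨2, fun r hr => ?_⟩
    obtain ⟨F, hF, rfl⟩ := hadm r hr
    exact div_le_of_le_mul₀ (integral_nonneg fun x => abs_nonneg _) (by norm_num) hF.apply_zero_le
  have hne0 : ∀ {F : ℝ → ℝ}, 0 < F 0 → F ≠ 0 := fun h e => by simp [e] at h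
  have hint : ∀ {F : ℝ → ℝ}, Admissible F → 0 < F 0 → 0 < ∫ x, |F x| := fun hF h => by
    linarith [hF.apply_zero_le]
  obtain ⟨C, hC⟩ : ∃ C, C = sSup S := ⟨_, rfl⟩
  have hle : ∀ {F : ℝ → ℝ}, Admissible F → 0 < F 0 → F 0 / (∫ x, |F x|) ≤ C := fun hF h =>
    hC ▸ le_csSup hbdd (hmem hF (hne0 h))
  obtain ⟨F₀, hF₀, hF₀0⟩ := exists_admissible_apply_zero_pos
  have hCpos : 0 < C := (div_pos hF₀0 (hint hF₀ hF₀0)).trans_le (hle hF₀ hF₀0)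
  have hr1 : ∀ n : ℕ, 1 / ((n : ℝ) + 1) ≤ 1 := fun n => by
    simpa using Nat.one_div_le_one_div (α := ℝ) (Nat.zero_le n)
  obtain ⟨G, hG, hG1, hGC⟩ := Admissible.exists_of_approx
    (r := fun n => C * (1 - 1 / ((n : ℝ) + 1))) (c := C)
    (fun n => mul_nonneg hCpos.le (sub_nonneg.2 (hr1 n)))
    (fun m n hmn => mul_le_mul_of_nonneg_left
      (sub_le_sub_left (Nat.one_div_le_one_div hmn) _) hCpos.le)
    (by simpa using (tendsto_one_div_add_atTop_nhds_zero_nat.const_sub 1).const_mul C)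
    (fun n => by
      have hlt : C * (1 - 1 / ((n : ℝ) + 1)) < sSup S := by
        rw [← hC]
        exact mul_lt_of_lt_one_right hCpos (sub_lt_self _ Nat.one_div_pos_of_nat)
      obtain ⟨r, hr, hlt⟩ := exists_lt_of_lt_csSup ⟨_, hmem hF₀ (hne0 hF₀0)⟩ hlt
      obtain ⟨F, hF, rfl⟩ := hadm r hr
      have hN : 0 ≤ ∫ x, |F x| := integral_nonneg fun x => abs_nonneg _
      refine ⟨fun x => (∫ x, |F x|)⁻¹ * F x, hF.const_mul (inv_nonneg.2 hN), ?_, ?_⟩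
      · simp only [abs_mul, integral_const_mul, abs_of_nonneg (inv_nonneg.2 hN)]
        exact inv_mul_le_one
      · exact hlt.le.trans_eq (div_eq_inv_mul _ _))
  have hG0 : 0 < G 0 := hCpos.trans_le hGC
  refine ⟨G, hG.continuous, hG.integrable, hne0 hG0, hG.even, hG.nonpos, ?_⟩
  refine le_antisymm ((hle hG hG0).trans_eq hC) ?_
  change sSup S ≤ _
  rw [← hC, le_div_iff₀ (hint hG hG0)]
  exact (mul_le_of_le_one_right hCpos.le hG1).trans hGC
end
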